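/- Let K be a normal Hopf subalgebra of H and M a finite-dimensional left K-module. Then: (1) the restriction to K of the induced module satisfies M↑_K^H ↓_K^H ≅ ⊕_{C ∈ H/K} {}^C M as K-modules, where the sum runs over representatives C of the right cosets of K in H; (2) M↑_K^H is an irreducible H-module if and only if M is an irreducible K-module which is not a direct summand of any conjugate module {}^C M for any simple subcoalgebra C of H with C ⊄ K. -/

import Mathlib

open TensorProduct

namespace MackeyPaper

noncomputable section

universe v

variable (k : Type) [Field k] [CharZero k] [IsAlgClosed k]
variable (H : Type) [Ring H] [HopfAlgebra k H]

/-- A subcoalgebra of `H`: a `k`-subspace `C` with `Δ(C) ⊆ C ⊗ C`. -/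
def IsSubcoalgebra (C : Submodule k H) : Prop :=
  ∀ c ∈ C, Coalgebra.comul (R := k) c ∈
    LinearMap.range (TensorProduct.map C.subtype C.subtype)

/-- A simple (nonzero, minimal) subcoalgebra of `H`. -/
def IsSimpleSubcoalgebra (C : Submodule k H) : Prop :=
  IsSubcoalgebra k H C ∧ C ≠ ⊥ ∧
    ∀ D : Submodule k H, D ≤ C → IsSubcoalgebra k H D → D ≠ ⊥ → D = C

/-- A Hopf subalgebra of `H`: a subalgebra which is a subcoalgebra and is
stable under the antipode. -/
def IsHopfSubalgebra (K : Subalgebra k H) : Prop :=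
  IsSubcoalgebra k H K.toSubmodule ∧ ∀ x ∈ K, HopfAlgebra.antipode (R := k) x ∈ K

/-- `Λ` is the (two-sided) idempotent integral of the Hopf subalgebra `K`,
i.e. the integral normalized by `ε(Λ) = 1`. -/
def IsIdempotentIntegral (K : Subalgebra k H) (Λ : H) : Prop :=
  Λ ∈ K ∧ Coalgebra.counit (R := k) Λ = 1 ∧
    ∀ x ∈ K, x * Λ = Coalgebra.counit (R := k) x • Λ ∧
      Λ * x = Coalgebra.counit (R := k) x • Λ

/-- A cocommutative element of `H`; the cocommutative elements of `H` form
the character ring `C(H^*)`. -/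
def IsCocomm (x : H) : Prop :=
  (TensorProduct.comm k H H) (Coalgebra.comul (R := k) x) = Coalgebra.comul (R := k) x

/-- The character ring `C(H^*)`, i.e. the space of cocommutative elements of `H`,
as a `k`-subspace of `H`. -/
def charRing : Submodule k H :=
  LinearMap.ker ((TensorProduct.comm k H H).toLinearMap ∘ₗ Coalgebra.comul (R := k)
      - Coalgebra.comul (R := k))

/-- `d` is the irreducible character (of `H^*`) associated to the simple
subcoalgebra `C`: the unique cocommutative element of `C` whose counit is the
positive square root of `dim_k C`. -/
def IsCharacterOf (d : H) (C : Submodule k H) : Prop :=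
  d ∈ C ∧ IsCocomm k H d ∧
    Coalgebra.counit (R := k) d = ((Nat.sqrt (Module.finrank k ↥C) : ℕ) : k)

/-- The right coset `CK` of a subcoalgebra `C`, i.e. the subspace `C·K`. -/
def CKsub (K : Subalgebra k H) (C : Submodule k H) : Submodule k H :=
  C * K.toSubmodule

/-- The conjugate Hopf subalgebra `ᶜK` of `K` by a simple subcoalgebra `C`
(with associated irreducible character `c`): the span of all simple
subcoalgebras of `H` whose irreducible character `d` satisfies
`d·c·Λ_K = ε(d)·c·Λ_K`.  (The condition is stated for all cocommutative
elements of `C` resp. `D`; this is equivalent, since the cocommutative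
elements of a simple subcoalgebra are exactly the scalar multiples of its
irreducible character.) -/
def conjK (K : Subalgebra k H) (Λ : H) (C : Submodule k H) : Submodule k H :=
  sSup {D : Submodule k H | IsSimpleSubcoalgebra k H D ∧
    ∀ d ∈ D, IsCocomm k H d → ∀ c ∈ C, IsCocomm k H c →
      d * (c * Λ) = Coalgebra.counit (R := k) d • (c * Λ)}

/-- A complete irredundant system of representatives (by simple subcoalgebras)
of the double cosets `L\H/K`.  (Taking `L = ⊥` gives a system of
representatives of the right cosets `H/K`.) -/
def IsDoubleCosetReps (L K : Subalgebra k H) {ι : Type} (rep : ι → Submodule k H) : Prop :=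
  (∀ i, IsSimpleSubcoalgebra k H (rep i)) ∧
  (∀ i j, L.toSubmodule * rep i * K.toSubmodule = L.toSubmodule * rep j * K.toSubmodule
      → i = j) ∧
  (∀ C : Submodule k H, IsSimpleSubcoalgebra k H C →
      ∃ i, C ≤ L.toSubmodule * rep i * K.toSubmodule)

section Ind

variable (K : Subalgebra k H) (M : Type v) [AddCommGroup M] [Module k M]
  [Module ↥K M] [IsScalarTower k ↥K M]

/-- The relations defining the induced module `H ⊗_K M` as a quotient of
`H ⊗_k M`: the `H`-submodule generated by the elements `a ⊗ m - 1 ⊗ a·m`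
for `a ∈ K` (equivalently, spanned by all `h·a ⊗ m - h ⊗ a·m`). -/
def indRel : Submodule H (H ⊗[k] M) :=
  Submodule.span H {z | ∃ (a : ↥K) (m : M),
    z = (a : H) ⊗ₜ[k] m - (1 : H) ⊗ₜ[k] (a • m)}

/-- The induced module `M↑_K^H = H ⊗_K M`, a left `H`-module. -/
abbrev Ind := (H ⊗[k] M) ⧸ indRel k H K M

variable (C : Submodule k H)

/-- The underlying space `CK ⊗_k M` of which the conjugate module `ᶜM` is a
quotient. -/
def CKM : Type _ := ↥(CKsub k H K C) ⊗[k] M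

instance : AddCommGroup (CKM k H K M C) :=
  inferInstanceAs (AddCommGroup (↥(CKsub k H K C) ⊗[k] M))

instance : Module k (CKM k H K M C) :=
  inferInstanceAs (Module k (↥(CKsub k H K C) ⊗[k] M))

/-- The pure tensor `x ⊗ m` as an element of `CK ⊗_k M`. -/
def ckmk (x : ↥(CKsub k H K C)) (m : M) : CKM k H K M C := x ⊗ₜ[k] m

/-- The relations defining the conjugate module `ᶜM = CK ⊗_K M` as a quotient
of `CK ⊗_k M`: `x·a ⊗ m - x ⊗ a·m` for `a ∈ K`. -/
def conjRel : Submodule k (CKM k H K M C) :=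
  Submodule.span k {z | ∃ (x : ↥(CKsub k H K C)) (a : ↥K) (m : M)
    (hxa : (x : H) * (a : H) ∈ CKsub k H K C),
    z = ckmk k H K M C ⟨(x : H) * (a : H), hxa⟩ m - ckmk k H K M C x (a • m)}

/-- The conjugate module `ᶜM := CK ⊗_K M`. -/
abbrev ConjM := CKM k H K M C ⧸ conjRel k H K M C

/-- The canonical copy of the conjugate module `ᶜM = CK ⊗_K M` inside
`H ⊗_K M` (the image of `CK ⊗_K M` under multiplication; this is indeed a
copy of `ᶜM` since `H` is a free right `K`-module and `CK` is one of the
coset summands). -/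
def conjMsub : Submodule k (Ind k H K M) :=
  Submodule.span k {z | ∃ (x : H) (_ : x ∈ CKsub k H K C) (m : M),
    z = Submodule.Quotient.mk (x ⊗ₜ[k] m)}

end Ind

section Comp

variable (L K : Subalgebra k H) (Λ : H) (C : Submodule k H)
variable (M : Type v) [AddCommGroup M] [Module k M] [Module ↥K M] [IsScalarTower k ↥K M]

/-- The underlying space `L ⊗_k (CK ⊗_k M)`. -/
def LCM : Type _ := ↥L ⊗[k] CKM k H K M C

instance : AddCommGroup (LCM k H L K C M) :=
  inferInstanceAs (AddCommGroup (↥L ⊗[k] CKM k H K M C))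

instance : Module k (LCM k H L K C M) :=
  inferInstanceAs (Module k (↥L ⊗[k] CKM k H K M C))

/-- The pure tensor `l ⊗ w` as an element of `L ⊗_k (CK ⊗_k M)`. -/
def lcmk (l : ↥L) (w : CKM k H K M C) : LCM k H L K C M := l ⊗ₜ[k] w

/-- The relations defining `L ⊗_{L ∩ ᶜK} ᶜM` as a quotient of
`L ⊗_k (CK ⊗_k M)`: the balancedness relations over `L ∩ ᶜK` (first set),
together with (the image of) the relations defining `ᶜM = CK ⊗_K M`
(second set). -/
def compRel : Submodule k (LCM k H L K C M) :=
  Submodule.span k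
    ({z | ∃ (l : ↥L) (a : H) (haL : a ∈ L) (_ : a ∈ conjK k H K Λ C)
        (x : ↥(CKsub k H K C)) (m : M) (hax : a * (x : H) ∈ CKsub k H K C),
        z = lcmk k H L K C M ⟨(l : H) * a, mul_mem l.2 haL⟩ (ckmk k H K M C x m)
          - lcmk k H L K C M l (ckmk k H K M C ⟨a * (x : H), hax⟩ m)} ∪
     {z | ∃ (l : ↥L) (x : ↥(CKsub k H K C)) (a : ↥K) (m : M)
        (hxa : (x : H) * (a : H) ∈ CKsub k H K C),
        z = lcmk k H L K C M l (ckmk k H K M C ⟨(x : H) * (a : H), hxa⟩ m)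
          - lcmk k H L K C M l (ckmk k H K M C x (a • m))})

/-- The module `L ⊗_{L ∩ ᶜK} ᶜM` (a left `L`-module via multiplication on the
first tensor factor). -/
abbrev Comp := LCM k H L K C M ⧸ compRel k H L K Λ C M

end Comp

open DirectSum

section Mackey

variable (L K : Subalgebra k H) (Λ : H)

/-- The Mackey isomorphism property for the pair `(L, K)` at the `K`-module
`M`: for any system of double coset representatives, the left-multiplication
map `⊕_C L ⊗_{L ∩ ᶜK} ᶜM → M↑_K^H↓_L^H`, `l ⊗ v ↦ l·v`, is an isomorphism of
`L`-modules.  (A `k`-linear map satisfying the displayed formula on the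
spanning elements is automatically `L`-equivariant for the evident
`L`-actions, so this property is stated for `k`-linear maps.) -/
def MackeyAt (M : Type v) [AddCommGroup M] [Module k M] [Module ↥K M]
    [IsScalarTower k ↥K M] [Module.Finite k M] : Prop :=
  ∀ (ι : Type) [DecidableEq ι] (rep : ι → Submodule k H),
    IsDoubleCosetReps k H L K rep →
    ∃ π : (⨁ i : ι, Comp k H L K Λ (rep i) M) →ₗ[k] Ind k H K M,
      Function.Bijective π ∧
      ∀ (i : ι) (l : ↥L) (x : ↥(CKsub k H K (rep i))) (m : M),
        π (DirectSum.of (fun i => Comp k H L K Λ (rep i) M) i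
            (Submodule.Quotient.mk (lcmk k H L K (rep i) M l (ckmk k H K M (rep i) x m)))) =
          Submodule.Quotient.mk (((l : H) * (x : H)) ⊗ₜ[k] m)

/-- `(L, K)` is a Mackey pair of Hopf subalgebras of `H` (here `Λ` is the
idempotent integral of `K`): for every finite-dimensional `K`-module `M` the
left-multiplication homomorphism `π_M` is an isomorphism. -/
def IsMackeyPair : Prop :=
  ∀ (M : Type v) [AddCommGroup M] [Module k M] [Module ↥K M]
    [IsScalarTower k ↥K M] [Module.Finite k M], MackeyAt k H L K Λ M

end Mackey


section Statements

/-- The left adjoint action `h ⊗ x ↦ ∑ h₁ x S(h₂)` of `H` on itself, as a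
linear map. -/
def adActL : H →ₗ[k] H →ₗ[k] H :=
  (TensorProduct.lift
    (LinearMap.mk₂ k
      (fun a b => (LinearMap.mulRight k (HopfAlgebra.antipode (R := k) b)).comp
        (LinearMap.mulLeft k a))
      (fun a a' b => by ext x; simp [add_mul])
      (fun c a b => by ext x; simp [smul_mul_assoc])
      (fun a b b' => by ext x; simp [mul_add])
      (fun c a b => by ext x; simp [mul_smul_comm]))) ∘ₗ
    Coalgebra.comul (R := k)

/-- The right adjoint action `h ⊗ x ↦ ∑ S(h₁) x h₂` of `H` on itself, as a
linear map. -/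
def adActR : H →ₗ[k] H →ₗ[k] H :=
  (TensorProduct.lift
    (LinearMap.mk₂ k
      (fun a b => (LinearMap.mulRight k b).comp
        (LinearMap.mulLeft k (HopfAlgebra.antipode (R := k) a)))
      (fun a a' b => by ext x; simp [add_mul])
      (fun c a b => by ext x; simp [smul_mul_assoc])
      (fun a b b' => by ext x; simp [mul_add])
      (fun c a b => by ext x; simp [mul_smul_comm]))) ∘ₗ
    Coalgebra.comul (R := k)

/-- A normal Hopf subalgebra of `H`: a Hopf subalgebra stable under both the
left and the right adjoint action of `H` on itself. -/
def IsNormalHopfSubalgebra (K : Subalgebra k H) : Prop :=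
  IsHopfSubalgebra k H K ∧
    ∀ h : H, ∀ x ∈ K, adActL k H h x ∈ K ∧ adActR k H h x ∈ K

end Statements

end

end MackeyPaper

section

open TensorProduct Coalgebra HopfAlgebra

namespace HopfAlgebra

section Sweedler

variable {R A ι : Type*} [CommSemiring R] [Semiring A] [HopfAlgebra R A]

theorem sum_counit_right_smul {x : A} (r : Repr R x ι) :
    ∑ i ∈ r.index, counit (R := R) (r.right i) • r.left i = x := by
  simpa only [map_sum, TensorProduct.rid_tmul, one_smul] using
    congrArg (TensorProduct.rid R A) (sum_tmul_counit_eq r)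

/-- `∑ (x₁)₁ ⊗ (x₁)₂ S(x₂) = x ⊗ 1`. -/
theorem sum_comul_mul_one_tmul_antipode {x : A} (r : Repr R x ι) :
    ∑ i ∈ r.index, comul (R := R) (r.left i) * (1 ⊗ₜ[R] antipode R (r.right i)) = x ⊗ₜ[R] 1 := by
  have h := congrArg (LinearMap.lTensor A (LinearMap.mul' R A ∘ₗ LinearMap.lTensor A (antipode R)))
    (sum_tmul_tmul_eq r (fun i => ℛ R (r.left i)) (fun i => ℛ R (r.right i)))
  simp only [map_sum, LinearMap.lTensor_tmul, LinearMap.comp_apply, LinearMap.mul'_apply,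
    ← tmul_sum, sum_mul_antipode_eq_smul, tmul_smul] at h
  simp only [← (ℛ R (r.left _)).eq, Finset.sum_mul, Algebra.TensorProduct.tmul_mul_tmul, mul_one]
  rw [h]
  simp only [smul_tmul', ← sum_tmul, sum_counit_right_smul]

/-- `∑ S(x₁) (x₂)₁ ⊗ (x₂)₂ = 1 ⊗ x`. -/
theorem sum_antipode_tmul_one_mul_comul {x : A} (r : Repr R x ι) :
    ∑ i ∈ r.index, (antipode R (r.left i) ⊗ₜ[R] 1) * comul (R := R) (r.right i) = 1 ⊗ₜ[R] x := by
  have h := congrArg (LinearMap.rTensor A (LinearMap.mul' R A ∘ₗ LinearMap.rTensor A (antipode R))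
      ∘ₗ (TensorProduct.assoc R A A A).symm.toLinearMap)
    (sum_tmul_tmul_eq r (fun i => ℛ R (r.left i)) (fun i => ℛ R (r.right i)))
  simp only [map_sum, LinearMap.rTensor_tmul, LinearMap.comp_apply, LinearMap.mul'_apply,
    LinearEquiv.coe_coe, TensorProduct.assoc_symm_tmul,
    ← sum_tmul, sum_antipode_mul_eq_smul] at h
  simp only [← (ℛ R (r.right _)).eq, Finset.mul_sum, Algebra.TensorProduct.tmul_mul_tmul, one_mul]
  rw [← h]
  simp only [smul_tmul, ← tmul_sum, sum_counit_smul]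

/-- `∑ (x₁)₁ ⊗ S((x₁)₂) x₂ = x ⊗ 1`. -/
theorem sum_lTensor_antipode_comul_mul {x : A} (r : Repr R x ι) :
    ∑ i ∈ r.index, LinearMap.lTensor A (antipode R) (comul (R := R) (r.left i)) *
      (1 ⊗ₜ[R] r.right i) = x ⊗ₜ[R] 1 := by
  have h := congrArg (LinearMap.lTensor A (LinearMap.mul' R A ∘ₗ LinearMap.rTensor A (antipode R)))
    (sum_tmul_tmul_eq r (fun i => ℛ R (r.left i)) (fun i => ℛ R (r.right i)))
  simp only [map_sum, LinearMap.lTensor_tmul, LinearMap.rTensor_tmul, LinearMap.comp_apply,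
    LinearMap.mul'_apply, ← tmul_sum, sum_antipode_mul_eq_smul, tmul_smul] at h
  simp only [← (ℛ R (r.left _)).eq, map_sum, LinearMap.lTensor_tmul, Finset.sum_mul,
    Algebra.TensorProduct.tmul_mul_tmul, mul_one]
  rw [h]
  simp only [smul_tmul', ← sum_tmul, sum_counit_right_smul]

variable (R A) in
/-- The map `x ⊗ y ↦ S(y) ⊗ S(x)`. -/
noncomputable def antipodeSwap : A ⊗[R] A →ₗ[R] A ⊗[R] A :=
  TensorProduct.map (antipode R) (antipode R) ∘ₗ (TensorProduct.comm R A A).toLinearMap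

@[simp] theorem antipodeSwap_tmul (x y : A) :
    antipodeSwap R A (x ⊗ₜ y) = antipode R y ⊗ₜ antipode R x := rfl

theorem antipodeSwap_mul (u v : A ⊗[R] A) :
    antipodeSwap R A (u * v) = antipodeSwap R A v * antipodeSwap R A u := by
  induction u with
  | zero => simp
  | add a b ha hb => simp only [add_mul, mul_add, map_add, ha, hb]
  | tmul a b =>
    induction v with
    | zero => simp
    | add c d hc hd => simp only [add_mul, mul_add, map_add, hc, hd]
    | tmul c d => simp [antipode_mul_antidistrib]

theorem comul_antipode (x : A) :
    comul (R := R) (antipode R x) = antipodeSwap R A (comul x) := by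
  have key (y : A) (r : Repr R y (A × A)) :
      ∑ i ∈ r.index, antipodeSwap R A (comul (R := R) (r.left i)) * comul (R := R) (r.right i)
        = counit (R := R) y • 1 := by
    have h := congrArg (LinearMap.mul' R (A ⊗[R] A) ∘ₗ
        TensorProduct.map (antipodeSwap R A) (comul (R := R)) ∘ₗ
        (TensorProduct.assoc R A A A).symm.toLinearMap)
      (sum_tmul_tmul_eq r (fun i => ℛ R (r.left i)) (fun i => ℛ R (r.right i)))
    simp only [map_sum, LinearMap.comp_apply, LinearMap.mul'_apply, TensorProduct.map_tmul,
      LinearEquiv.coe_coe, TensorProduct.assoc_symm_tmul, antipodeSwap_tmul] at h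
    have h' (a : A) (b : A) : antipode R b ⊗ₜ[R] antipode R a =
        (1 ⊗ₜ[R] antipode R a) * (antipode R b ⊗ₜ[R] 1) := by simp
    simp only [← (ℛ R (r.left _)).eq, map_sum, Finset.sum_mul, antipodeSwap_tmul]
    rw [h]
    simp only [h', mul_assoc, ← Finset.mul_sum, sum_antipode_tmul_one_mul_comul]
    simp only [Algebra.TensorProduct.tmul_mul_tmul, mul_one, ← tmul_sum,
      sum_antipode_mul_eq_smul, tmul_smul, Algebra.TensorProduct.one_def]
  have h := congrArg (LinearMap.mul' R (A ⊗[R] A) ∘ₗ TensorProduct.map (antipodeSwap R A ∘ₗ comul)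
      (LinearMap.mul' R (A ⊗[R] A) ∘ₗ
        TensorProduct.map (comul (R := R)) (comul (R := R) ∘ₗ antipode R)))
    (sum_tmul_tmul_eq (ℛ R x) (fun i => ℛ R ((ℛ R x).left i)) (fun i => ℛ R ((ℛ R x).right i)))
  simp only [map_sum, LinearMap.comp_apply, LinearMap.mul'_apply, TensorProduct.map_tmul] at h
  simp only [← mul_assoc, ← Finset.sum_mul, key] at h
  simp only [mul_assoc, ← Finset.mul_sum, ← Bialgebra.comul_mul, ← map_sum,
    sum_mul_antipode_eq_smul] at h
  simp only [map_smul, Bialgebra.comul_one, mul_smul_comm, smul_mul_assoc, one_mul, mul_one] at h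
  simpa only [← map_smul, ← map_sum, sum_counit_smul, sum_counit_right_smul] using h

/-- `∑ S²(x₂) S(x₁)₁ ⊗ S(x₁)₂ = 1 ⊗ S(x)`. -/
theorem sum_antipode_antipode_tmul_one_mul_comul {x : A} (r : Repr R x ι) :
    ∑ i ∈ r.index, (antipode R (antipode R (r.right i)) ⊗ₜ[R] 1) *
      comul (R := R) (antipode R (r.left i)) = 1 ⊗ₜ[R] antipode R x := by
  simpa [map_sum, antipodeSwap_mul, comul_antipode] using
    congrArg (antipodeSwap R A) (sum_comul_mul_one_tmul_antipode r)

/-- `∑ S(x₁)₁ x₂ ⊗ S(x₁)₂ = 1 ⊗ S(x)`. -/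
theorem sum_comul_antipode_mul_tmul_one {x : A} (r : Repr R x ι) :
    ∑ i ∈ r.index, comul (R := R) (antipode R (r.left i)) * (r.right i ⊗ₜ[R] 1) =
      1 ⊗ₜ[R] antipode R x := by
  have h := congrArg (TensorProduct.comm R A A ∘ LinearMap.rTensor A (antipode R))
    (sum_lTensor_antipode_comul_mul r)
  simp only [Function.comp_apply, map_sum, LinearMap.rTensor_tmul, TensorProduct.comm_tmul] at h
  rw [← h]
  refine Finset.sum_congr rfl fun i _ => ?_
  simp [comul_antipode, ← (ℛ R (r.left i)).eq, Finset.sum_mul]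

/-- `∑ S²(x₁)₁ ⊗ S(x₂) S²(x₁)₂ = S²(x) ⊗ 1`. -/
theorem sum_one_tmul_antipode_mul_comul {x : A} (r : Repr R x ι) :
    ∑ i ∈ r.index, (1 ⊗ₜ[R] antipode R (r.right i)) *
      comul (R := R) (antipode R (antipode R (r.left i))) =
      antipode R (antipode R x) ⊗ₜ[R] 1 := by
  simpa [map_sum, antipodeSwap_mul, comul_antipode] using
    congrArg (antipodeSwap R A) (sum_comul_antipode_mul_tmul_one r)

/-- `∑ S(x₂)₁ ⊗ x₁ S(x₂)₂ = S(x) ⊗ 1`. -/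
theorem sum_one_tmul_mul_comul_antipode {x : A} (r : Repr R x ι) :
    ∑ i ∈ r.index, (1 ⊗ₜ[R] r.left i) * comul (R := R) (antipode R (r.right i)) =
      antipode R x ⊗ₜ[R] 1 := by
  have h := congrArg ((TensorProduct.comm R A A).toLinearMap ∘ₗ
      TensorProduct.map (LinearMap.mul' R A ∘ₗ LinearMap.lTensor A (antipode R)) (antipode R)
      ∘ₗ (TensorProduct.assoc R A A A).symm.toLinearMap)
    (sum_tmul_tmul_eq r (fun i => ℛ R (r.left i)) (fun i => ℛ R (r.right i)))
  simp only [map_sum, LinearMap.comp_apply, LinearEquiv.coe_coe, TensorProduct.assoc_symm_tmul,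
    TensorProduct.map_tmul, LinearMap.lTensor_tmul, LinearMap.mul'_apply,
    TensorProduct.comm_tmul] at h
  simp only [← tmul_sum, sum_mul_antipode_eq_smul] at h
  simp only [comul_antipode, ← (ℛ R (r.right _)).eq, map_sum, antipodeSwap_tmul, Finset.mul_sum,
    Algebra.TensorProduct.tmul_mul_tmul, one_mul]
  rw [← h]
  simp only [tmul_smul, smul_tmul', ← sum_tmul, ← map_smul, ← map_sum, sum_counit_smul]

end Sweedler

end HopfAlgebra

end

section

open TensorProduct Coalgebra HopfAlgebra

namespace HopfAlgebra

section Contraction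

variable {k A : Type*} [Field k] [Ring A] [Algebra k A]

/-- The contraction `x ⊗ y ↦ p(x) y`. -/
noncomputable def contractL (p : A →ₗ[k] k) : A ⊗[k] A →ₗ[k] A :=
  (TensorProduct.lid k A).toLinearMap ∘ₗ LinearMap.rTensor A p

/-- The contraction `x ⊗ y ↦ p(y) x`. -/
noncomputable def contractR (p : A →ₗ[k] k) : A ⊗[k] A →ₗ[k] A :=
  (TensorProduct.rid k A).toLinearMap ∘ₗ LinearMap.lTensor A p

@[simp] theorem contractL_tmul (p : A →ₗ[k] k) (x y : A) :
    contractL p (x ⊗ₜ y) = p x • y := by simp [contractL]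

@[simp] theorem contractR_tmul (p : A →ₗ[k] k) (x y : A) :
    contractR p (x ⊗ₜ y) = p y • x := by simp [contractR]

theorem contractL_one_tmul_mul (p : A →ₗ[k] k) (a : A) (u : A ⊗[k] A) :
    contractL p ((1 ⊗ₜ a) * u) = a * contractL p u := by
  induction u with
  | zero => simp
  | add u v hu hv => simp only [mul_add, map_add, hu, hv]
  | tmul x y => simp

theorem contractR_tmul_one_mul (p : A →ₗ[k] k) (a : A) (u : A ⊗[k] A) :
    contractR p ((a ⊗ₜ 1) * u) = a * contractR p u := by
  induction u with
  | zero => simp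
  | add u v hu hv => simp only [mul_add, map_add, hu, hv]
  | tmul x y => simp

theorem contractL_tmul_one_mul (p : A →ₗ[k] k) (z : A) (u : A ⊗[k] A) :
    contractL p ((z ⊗ₜ 1) * u) = contractL (p ∘ₗ LinearMap.mulLeft k z) u := by
  induction u with
  | zero => simp
  | add u v hu hv => simp only [mul_add, map_add, hu, hv]
  | tmul x y => simp

theorem apply_contractL (p q : A →ₗ[k] k) (u : A ⊗[k] A) :
    q (contractL p u) = p (contractR q u) := by
  induction u with
  | zero => simp
  | add u v hu hv => simp only [map_add, hu, hv]
  | tmul x y => simp [mul_comm]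

end Contraction

section Integral

variable {k H : Type*} [Field k] [Ring H] [HopfAlgebra k H]

theorem eq_of_forall_dual {x y : H} (h : ∀ p : H →ₗ[k] k, p x = p y) : x = y := by
  rw [← sub_eq_zero, ← Module.forall_dual_apply_eq_zero_iff k]
  intro p
  rw [map_sub, h, sub_self]

theorem antipode_contractR (p : H →ₗ[k] k) (u : H ⊗[k] H) :
    antipode k (contractR (p ∘ₗ antipode k) u) = contractL p (antipodeSwap k H u) := by
  induction u with
  | zero => simp
  | add u v hu hv => simp only [map_add, hu, hv]
  | tmul x y => simp

variable (k H) in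
theorem exists_left_integral [IsSemisimpleRing H] :
    ∃ Λ : H, counit (R := k) Λ = 1 ∧ ∀ x, x * Λ = counit (R := k) x • Λ := by
  obtain ⟨L, hL⟩ := exists_isCompl (RingHom.ker (Bialgebra.counitAlgHom k H) : Submodule H H)
  obtain ⟨a, ha, Λ, hΛ, h⟩ := Submodule.mem_sup.mp (hL.sup_eq_top ▸ Submodule.mem_top (x := (1 : H)))
  have ha' : counit (R := k) a = 0 := ha
  have hε : counit (R := k) Λ = 1 := by
    have := congrArg (counit (R := k)) h
    simpa [ha'] using this
  refine ⟨Λ, hε, fun x => sub_eq_zero.mp ?_⟩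
  refine (Submodule.disjoint_def.mp hL.disjoint) _ ?_ ?_
  · rw [RingHom.mem_ker]
    simp [hε]
  · refine L.sub_mem (L.smul_mem x hΛ) ?_
    rw [← algebraMap_smul H (counit (R := k) x) Λ]
    exact L.smul_mem _ hΛ

variable (k H) in
/-- The functional `h ↦ Tr(x ↦ S²(x) h)`. -/
noncomputable def traceIntegral : H →ₗ[k] k :=
  LinearMap.trace k H ∘ₗ LinearMap.lcomp k H (antipode k ∘ₗ antipode k) ∘ₗ (LinearMap.mul k H).flip

theorem traceIntegral_apply (h : H) : traceIntegral k H h =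
    LinearMap.trace k H (LinearMap.mulRight k h ∘ₗ antipode k ∘ₗ antipode k) := rfl

theorem traceIntegral_mul [FiniteDimensional k H] (h y : H) :
    traceIntegral k H (h * y) = traceIntegral k H (antipode k (antipode k y) * h) := by
  have : LinearMap.mulRight k (h * y) ∘ₗ antipode k ∘ₗ antipode k =
      LinearMap.mulRight k y ∘ₗ (LinearMap.mulRight k h ∘ₗ antipode k ∘ₗ antipode k) := by
    ext x; simp [mul_assoc]
  rw [traceIntegral_apply, this, LinearMap.trace_comp_comm', traceIntegral_apply]
  congr 1
  ext x
  simp [antipode_mul_antidistrib, mul_assoc]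

/-- The trace functional is an integral on `H`. -/
theorem contractL_traceIntegral_comul [FiniteDimensional k H] (h : H) :
    contractL (traceIntegral k H) (comul h) = traceIntegral k H h • (1 : H) := by
  refine eq_of_forall_dual (k := k) fun p => ?_
  rw [apply_contractL, map_smul, smul_eq_mul, traceIntegral_apply, traceIntegral_apply]
  let b := Module.finBasis k H
  let F : H →ₗ[k] H := LinearMap.mulRight k h ∘ₗ antipode k ∘ₗ antipode k
  let a (j) : H →ₗ[k] H := contractR (b.coord j) ∘ₗ comul
  let c (j) : H →ₗ[k] H :=
    contractR p ∘ₗ LinearMap.mulLeft k (1 ⊗ₜ[k] antipode k (b j)) ∘ₗ comul ∘ₗ F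
  have hc (j) (x : H) : c j x = contractR p ((1 ⊗ₜ[k] antipode k (b j)) * comul (R := k) (F x)) := rfl
  have hb (z : H) : ∑ j, b.coord j z • b j = z := b.sum_repr z
  have h1 : LinearMap.mulRight k (contractR p (comul h)) ∘ₗ antipode k ∘ₗ antipode k =
      ∑ j, c j ∘ₗ a j := by
    ext x
    have hF (y : H) : comul (R := k) (F y) = comul (R := k) (antipode k (antipode k y)) * comul h := by
      simp [F]
    simp only [LinearMap.comp_apply, LinearMap.mulRight_apply, LinearMap.sum_apply, a,
      ← contractR_tmul_one_mul]
    conv_rhs => enter [2, j]; rw [← (ℛ k x).eq]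
    simp only [map_sum, contractR_tmul, map_smul, hc, ← sum_one_tmul_antipode_mul_comul (ℛ k x),
      Finset.sum_mul, Finset.mul_sum, mul_smul_comm]
    rw [Finset.sum_comm]
    refine Finset.sum_congr rfl fun i _ => ?_
    simp only [← map_smul, ← map_sum, ← smul_mul_assoc, ← Finset.sum_mul, ← tmul_smul, ← tmul_sum,
      hb, hF, mul_assoc]
  have h2 : ∑ j, a j ∘ₗ c j = p 1 • F := by
    have key (z : H) (u : H ⊗[k] H) : ∑ j, p (antipode k (b j) * z) • contractR (b.coord j) u =
        contractR p (LinearMap.lTensor H (antipode k) u * (1 ⊗ₜ z)) := by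
      induction u with
      | zero => simp
      | add u v hu hv => simp only [map_add, smul_add, Finset.sum_add_distrib, hu, hv, add_mul]
      | tmul x y =>
        simp only [contractR_tmul, LinearMap.lTensor_tmul, Algebra.TensorProduct.tmul_mul_tmul,
          mul_one, smul_smul, ← Finset.sum_smul]
        congr 1
        conv_rhs => rw [← hb y]
        simp only [map_sum, map_smul, Finset.sum_mul, smul_mul_assoc, smul_eq_mul, mul_comm]
    ext x
    simp only [LinearMap.comp_apply, LinearMap.sum_apply, hc, a, LinearMap.smul_apply]
    generalize F x = y
    conv_lhs => enter [2, j]; rw [← (ℛ k y).eq]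
    simp only [Finset.mul_sum, Algebra.TensorProduct.tmul_mul_tmul, one_mul, map_sum,
      contractR_tmul, map_smul]
    rw [Finset.sum_comm]
    simp only [key, ← map_sum, sum_lTensor_antipode_comul_mul, contractR_tmul]
  rw [h1, map_sum]
  rw [Finset.sum_congr rfl fun j _ => LinearMap.trace_comp_comm' (a j) (c j), ← map_sum, h2,
    map_smul, smul_eq_mul, mul_comm]

theorem one_tmul_mul_comul_integral {Λ : H} (hΛ : ∀ x, x * Λ = counit (R := k) x • Λ) (x : H) :
    (1 ⊗ₜ[k] x) * comul (R := k) Λ = (antipode k x ⊗ₜ[k] 1) * comul (R := k) Λ := by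
  rw [← sum_antipode_tmul_one_mul_comul (ℛ k x), Finset.sum_mul]
  simp only [mul_assoc, ← Bialgebra.comul_mul, hΛ, map_smul, mul_smul_comm, ← smul_mul_assoc]
  rw [← Finset.sum_mul]
  simp only [smul_tmul', ← sum_tmul, ← map_smul, ← map_sum, sum_counit_right_smul]

theorem traceIntegral_integral [FiniteDimensional k H] {Λ : H}
    (hΛ : ∀ x, x * Λ = counit (R := k) x • Λ) :
    traceIntegral k H Λ = counit (R := k) Λ := by
  rw [traceIntegral_apply]
  have : LinearMap.mulRight k Λ ∘ₗ antipode k ∘ₗ antipode k =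
      (counit (R := k) (A := H)).smulRight Λ := by
    ext x; simp [hΛ]
  rw [this, LinearMap.trace_smulRight]

/-- Uniqueness of integrals on `H`. -/
theorem eq_counit_mul_traceIntegral_antipode [FiniteDimensional k H] {f : H →ₗ[k] k}
    (hf : ∀ h, contractR f (comul h) = f h • (1 : H)) {Λ : H} (hε : counit (R := k) Λ = 1)
    (hΛ : ∀ x, x * Λ = counit (R := k) x • Λ) (y : H) :
    f y = f Λ * traceIntegral k H (antipode k y) := by
  have h := apply_contractL (traceIntegral k H) f ((1 ⊗ₜ y) * comul Λ)
  rw [contractL_one_tmul_mul, contractL_traceIntegral_comul, traceIntegral_integral hΛ, hε,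
    one_smul, mul_one, one_tmul_mul_comul_integral hΛ, contractR_tmul_one_mul, hf] at h
  simpa using h

theorem contractL_antipode_tmul_one_mul_comul_integral [FiniteDimensional k H] {Λ : H}
    (hε : counit (R := k) Λ = 1) (hΛ : ∀ x, x * Λ = counit (R := k) x • Λ) (y : H) :
    contractL (traceIntegral k H) ((antipode k y ⊗ₜ 1) * comul Λ) = y := by
  rw [← one_tmul_mul_comul_integral hΛ, contractL_one_tmul_mul, contractL_traceIntegral_comul,
    traceIntegral_integral hΛ, hε, one_smul, mul_one]

variable (k H) in
theorem antipode_injective [FiniteDimensional k H] [IsSemisimpleRing H] :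
    Function.Injective (antipode k (A := H)) := by
  obtain ⟨Λ, hε, hΛ⟩ := exists_left_integral k H
  have h := contractL_antipode_tmul_one_mul_comul_integral hε hΛ
  intro x y hxy
  rw [← h x, hxy, h]

variable (k H) in
theorem antipode_surjective [FiniteDimensional k H] [IsSemisimpleRing H] :
    Function.Surjective (antipode k (A := H)) :=
  LinearMap.injective_iff_surjective.mp (antipode_injective k H)

theorem antipode_integral [FiniteDimensional k H] [IsSemisimpleRing H] {Λ : H}
    (hε : counit (R := k) Λ = 1) (hΛ : ∀ x, x * Λ = counit (R := k) x • Λ) :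
    antipode k Λ = Λ := by
  have h : antipode k Λ * Λ = antipode k Λ := by
    obtain ⟨y, hy⟩ := antipode_surjective k H Λ
    have h := antipode_mul_antidistrib (R := k) y Λ
    rw [hΛ, map_smul, ← counit_antipode (R := k) y, hy, hε, one_smul] at h
    exact h.symm
  rw [← h, hΛ, counit_antipode, hε, one_smul]

end Integral

end HopfAlgebra

end

section

open TensorProduct Coalgebra HopfAlgebra

namespace HopfAlgebra

section FiniteOrder

variable {k H : Type*} [Field k] [Ring H] [HopfAlgebra k H] [FiniteDimensional k H]
  [IsSemisimpleRing H]

theorem contractR_comp_antipode_comul {f : H →ₗ[k] k}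
    (hf : ∀ h, contractL f (comul h) = f h • (1 : H)) (h : H) :
    contractR (f ∘ₗ antipode k) (comul h) = (f ∘ₗ antipode k) h • (1 : H) := by
  apply antipode_injective k H
  rw [antipode_contractR, ← comul_antipode, hf]
  simp

theorem contractL_traceIntegral_antipode_comul {Λ : H} (hε : counit (R := k) Λ = 1)
    (hΛ : ∀ x, x * Λ = counit (R := k) x • Λ) (y : H) :
    contractL (traceIntegral k H ∘ₗ antipode k) (comul y) =
      traceIntegral k H (antipode k y) •
        contractL (traceIntegral k H ∘ₗ antipode k) (comul Λ) := by
  set ψ := traceIntegral k H ∘ₗ antipode k with hψ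
  have hinv := contractR_comp_antipode_comul (contractL_traceIntegral_comul (k := k) (H := H))
  rw [← hψ] at hinv
  refine eq_of_forall_dual (k := k) fun p => ?_
  have hf (h : H) : contractR (p ∘ₗ contractL ψ ∘ₗ comul) (comul h) =
      (p ∘ₗ contractL ψ ∘ₗ comul) h • (1 : H) := by
    let r := ℛ k h
    have h1 := congrArg ((TensorProduct.rid k H).toLinearMap ∘ₗ
        LinearMap.lTensor H (p ∘ₗ contractL ψ))
      (sum_tmul_tmul_eq r (fun i => ℛ k (r.left i)) (fun i => ℛ k (r.right i)))
    simp only [map_sum, LinearMap.comp_apply, LinearMap.lTensor_tmul, LinearEquiv.coe_coe,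
      TensorProduct.rid_tmul, contractL_tmul, map_smul] at h1
    have h2 (i) : ∑ j ∈ (ℛ k (r.left i)).index, (ψ ((ℛ k (r.left i)).right j) •
        p (r.right i)) • (ℛ k (r.left i)).left j = (p (r.right i) * ψ (r.left i)) • 1 := by
      rw [mul_smul, ← hinv, ← (ℛ k (r.left i)).eq]
      simp only [map_sum, contractR_tmul, Finset.smul_sum, smul_smul, smul_eq_mul, mul_comm]
    simp only [h2] at h1
    rw [← r.eq, map_sum]
    simp only [contractR_tmul, LinearMap.comp_apply]
    conv_lhs => enter [2, i]; rw [← (ℛ k (r.right i)).eq]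
    rw [← r.eq]
    simp only [map_sum, contractL_tmul, map_smul, Finset.sum_smul, smul_eq_mul]
    simp only [smul_eq_mul] at h1
    rw [← h1]
    simp only [mul_comm]
  exact (eq_counit_mul_traceIntegral_antipode hf hε hΛ y).trans (by simp [mul_comm])

theorem isGroupLikeElem_contractL_integral {Λ : H} (hε : counit (R := k) Λ = 1)
    (hΛ : ∀ x, x * Λ = counit (R := k) x • Λ) :
    IsGroupLikeElem k (contractL (traceIntegral k H ∘ₗ antipode k) (comul Λ)) := by
  have hψΛ : (traceIntegral k H ∘ₗ antipode k) Λ = 1 := by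
    rw [LinearMap.comp_apply, antipode_integral hε hΛ, traceIntegral_integral hΛ, hε]
  have hw := contractL_traceIntegral_antipode_comul hε hΛ
  set ψ := traceIntegral k H ∘ₗ antipode k with hψ
  set w := contractL ψ (comul Λ) with hw'
  let r := ℛ k Λ
  have hwr : w = ∑ i ∈ r.index, ψ (r.left i) • r.right i := by
    rw [hw', ← r.eq]; simp
  constructor
  · rw [hwr]
    simp only [map_sum, map_smul, smul_eq_mul]
    rw [← hψΛ]
    conv_rhs => rw [← sum_counit_right_smul r]
    simp [mul_comm]
  · have h1 := congrArg ((TensorProduct.lid k (H ⊗[k] H)).toLinearMap ∘ₗ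
        LinearMap.rTensor (H ⊗[k] H) ψ)
      (sum_tmul_tmul_eq r (fun i => ℛ k (r.left i)) (fun i => ℛ k (r.right i)))
    simp only [map_sum, LinearMap.comp_apply, LinearMap.rTensor_tmul, LinearEquiv.coe_coe,
      TensorProduct.lid_tmul] at h1
    simp only [smul_tmul', ← sum_tmul] at h1
    have h2 (i) : ∑ j ∈ (ℛ k (r.left i)).index, ψ ((ℛ k (r.left i)).left j) •
        (ℛ k (r.left i)).right j = ψ (r.left i) • w := by
      rw [LinearMap.comp_apply, ← hw, ← (ℛ k (r.left i)).eq]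
      simp
    simp only [h2, smul_tmul, ← tmul_sum, ← hwr] at h1
    rw [h1]
    conv_lhs => rw [hwr]
    simp only [map_sum, map_smul]
    refine Finset.sum_congr rfl fun i _ => ?_
    rw [← (ℛ k (r.right i)).eq, Finset.smul_sum]
    simp

theorem eq_zero_of_traceIntegral_mul {z : H} (h : ∀ x, traceIntegral k H (z * x) = 0) : z = 0 := by
  obtain ⟨Λ, hε, hΛ⟩ := exists_left_integral k H
  obtain ⟨y, rfl⟩ := antipode_surjective k H z
  have h0 : traceIntegral k H ∘ₗ LinearMap.mulLeft k (antipode k y) = 0 := LinearMap.ext h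
  have := contractL_antipode_tmul_one_mul_comul_integral hε hΛ y
  rw [contractL_tmul_one_mul, h0] at this
  rw [← this]
  simp [contractL]

variable (k H) in
/-- Radford's formula for a semisimple Hopf algebra: `S⁴` is conjugation by a grouplike. -/
theorem exists_isGroupLikeElem_antipode_pow_four :
    ∃ g : H, IsGroupLikeElem k g ∧
      ∀ x, g * x = antipode k (antipode k (antipode k (antipode k x))) * g := by
  obtain ⟨Λ, hε, hΛ⟩ := exists_left_integral k H
  let θ : H →ₗ[k] (H →ₗ[k] k) := (LinearMap.mul k H).compr₂ (traceIntegral k H)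
  have hθ (z x : H) : θ z x = traceIntegral k H (z * x) := rfl
  have hinj : Function.Injective θ := by
    rw [injective_iff_map_eq_zero]
    exact fun z hz => eq_zero_of_traceIntegral_mul fun x => by rw [← hθ, hz, LinearMap.zero_apply]
  have hsurj : Function.Surjective θ :=
    (LinearMap.injective_iff_surjective_of_finrank_eq_finrank
      (Subspace.dual_finrank_eq (K := k) (V := H)).symm).mp hinj
  obtain ⟨g, hg⟩ := hsurj (traceIntegral k H ∘ₗ antipode k)
  have hg' (x : H) : traceIntegral k H (g * x) = traceIntegral k H (antipode k x) := by
    rw [← hθ, hg, LinearMap.comp_apply]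
  refine ⟨g, ?_, fun x => ?_⟩
  · obtain ⟨y, hy⟩ := antipode_surjective k H g
    have := contractL_antipode_tmul_one_mul_comul_integral hε hΛ y
    rw [hy, contractL_tmul_one_mul, show traceIntegral k H ∘ₗ LinearMap.mulLeft k g = _ from hg] at this
    rw [← hy, ← this]
    exact (isGroupLikeElem_contractL_integral hε hΛ).antipode
  · refine sub_eq_zero.mp (eq_zero_of_traceIntegral_mul (k := k) fun y => ?_)
    rw [sub_mul, map_sub, sub_eq_zero, mul_assoc, hg', mul_assoc,
      antipode_mul_antidistrib, traceIntegral_mul, ← antipode_mul_antidistrib, ← hg', ← mul_assoc,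
      traceIntegral_mul]

variable (k H) in
theorem exists_antipode_sq_pow_eq_one :
    ∃ N : ℕ, 0 < N ∧ ((antipode k ∘ₗ antipode k : Module.End k H) ^ N) = 1 := by
  obtain ⟨g, hg, h⟩ := exists_isGroupLikeElem_antipode_pow_four k H
  have : Finite (GroupLike k H) :=
    (linearIndep_groupLikeVal (R := k) (A := H)).finite
  obtain ⟨n, hn, hpow⟩ := isOfFinOrder_iff_pow_eq_one.mp
    (isOfFinOrder_of_finite (⟨g, hg⟩ : GroupLike k H))
  have hgn : g ^ n = 1 := by simpa using congrArg GroupLike.val hpow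
  refine ⟨2 * n, by positivity, LinearMap.ext fun x => ?_⟩
  have hpow (m : ℕ) :
      g ^ m * x = ((antipode k ∘ₗ antipode k : Module.End k H) ^ (2 * m)) x * g ^ m := by
    induction m with
    | zero => simp
    | succ m ih =>
      rw [pow_succ', mul_assoc, ih, ← mul_assoc, h, mul_add, pow_add, mul_one, ← pow_mul_comm]
      simp [pow_two, mul_assoc]
  simpa [hgn] using (hpow n).symm

end FiniteOrder

end HopfAlgebra

end

section

open Module

section TraceAutomorphism

variable {k : Type*} [Field k] [CharZero k]

/-- An endomorphism of finite order is diagonalizable, with roots of unity as eigenvalues. -/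
theorem Module.End.exists_basis_of_pow_eq_one [IsAlgClosed k] {V : Type*}
    [AddCommGroup V] [Module k V] [FiniteDimensional k V] {T : End k V}
    {N : ℕ} (hN : 0 < N) (hT : T ^ N = 1) :
    ∃ (n : ℕ) (b : Basis (Fin n) k V) (μ : Fin n → k), (∀ i, μ i ^ N = 1) ∧
      ∀ i, T (b i) = μ i • b i := by
  classical
  have hs : T.IsSemisimple := by
    refine isSemisimple_of_squarefree_aeval_eq_zero (p := Polynomial.X ^ N - 1) ?_ (by simp [hT])
    exact (Polynomial.X_pow_sub_one_separable_iff.mpr (by exact_mod_cast hN.ne')).squarefree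
  have hd := DirectSum.isInternal_submodule_of_iSupIndep_of_iSup_eq_top
    T.eigenspaces_iSupIndep hs.iSup_eigenspace_eq_top
  let I := (ν : k) × Fin (finrank k (T.eigenspace ν))
  let v : Basis I k V := hd.collectedBasis fun μ ↦ finBasis k (T.eigenspace μ)
  have : Fintype I := FiniteDimensional.fintypeBasisIndex v
  have hv (i : I) : T (v i) = i.1 • v i := mem_eigenspace_iff.mp (hd.collectedBasis_mem _ i)
  refine ⟨Fintype.card I, v.reindex (Fintype.equivFin I), fun i => ((Fintype.equivFin I).symm i).1,
    fun i => ?_, fun i => by simp [hv]⟩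
  set j := (Fintype.equivFin I).symm i
  have h (n : ℕ) : (T ^ n) (v j) = j.1 ^ n • v j := by
    induction n with
    | zero => simp
    | succ n ih => rw [pow_succ', Module.End.mul_apply, ih, map_smul, hv, smul_smul, pow_succ]
  have := h N
  rw [hT, Module.End.one_apply, eq_comm] at this
  have h0 : (j.1 ^ N - 1) • v j = 0 := by rw [sub_smul, this, one_smul, sub_self]
  exact sub_eq_zero.mp ((smul_eq_zero.mp h0).resolve_right (v.ne_zero j))

theorem Module.End.trace_algEquiv_of_pow_eq_one [IsAlgClosed k] {V : Type*}
    [AddCommGroup V] [Module k V] [FiniteDimensional k V] [Nontrivial V]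
    (α : End k V ≃ₐ[k] End k V) {N : ℕ} (hN : 0 < N)
    (hα : α ^ N = 1) :
    ∃ (n : ℕ) (μ : Fin n → k), (∀ i, μ i ^ N = 1) ∧
      LinearMap.trace k (End k V) α.toLinearMap = (∑ i, μ i) * ∑ i, (μ i)⁻¹ := by
  obtain ⟨T, hT⟩ := α.eq_linearEquivConjAlgEquiv
  have hT' (X : End k V) : α X * (T : End k V) = (T : End k V) * X := by
    ext v; simp [hT]
  have hpow (n : ℕ) (X : End k V) : (α ^ n) X * (T : End k V) ^ n = (T : End k V) ^ n * X := by
    induction n generalizing X with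
    | zero => simp
    | succ n ih =>
      rw [pow_succ (T : End k V), mul_assoc, ← hT', pow_succ α, AlgEquiv.mul_apply, ← mul_assoc, ih,
        mul_assoc]
  have hc : (T : End k V) ^ N ∈ Subalgebra.center k (End k V) := by
    rw [Subalgebra.mem_center_iff]
    intro X
    simpa [hα] using hpow N X
  rw [Algebra.IsCentral.center_eq_bot, Algebra.mem_bot] at hc
  obtain ⟨c, hc⟩ := hc
  obtain ⟨d, hd⟩ := IsAlgClosed.exists_pow_nat_eq c hN
  have hunit : IsUnit (T : End k V) := by
    rw [Module.End.isUnit_iff]; exact T.bijective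
  have hc0 : c ≠ 0 := by
    rintro rfl
    rw [map_zero] at hc
    exact (hunit.pow N).ne_zero hc.symm
  have hd0 : d ≠ 0 := by
    rintro rfl
    exact hc0 (by rw [← hd, zero_pow hN.ne'])
  obtain ⟨n, b, μ, hμ, hb⟩ := Module.End.exists_basis_of_pow_eq_one (T := d⁻¹ • (T : End k V)) hN (by
    rw [smul_pow, ← hc, Algebra.algebraMap_eq_smul_one, smul_smul, ← hd, inv_pow,
      inv_mul_cancel₀ (pow_ne_zero N hd0), one_smul])
  refine ⟨n, μ, hμ, ?_⟩
  have hμ0 (i) : μ i ≠ 0 := by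
    intro h
    have := hμ i
    simp [h, hN.ne'] at this
  have hbT (i) : T (b i) = (d * μ i) • b i := by
    have := hb i
    rw [LinearMap.smul_apply] at this
    rw [mul_smul, ← this, smul_smul, mul_inv_cancel₀ hd0, one_smul]; rfl
  have hbT' (i) : T.symm (b i) = (d * μ i)⁻¹ • b i := by
    rw [LinearEquiv.symm_apply_eq, map_smul, hbT, smul_smul,
      inv_mul_cancel₀ (mul_ne_zero hd0 (hμ0 i)), one_smul]
  have key (p : Fin n × Fin n) : α (b.end p) = (μ p.1 * (μ p.2)⁻¹) • b.end p := by
    refine b.ext fun j => ?_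
    rw [hT, LinearEquiv.conjAlgEquiv_apply]
    simp only [LinearMap.comp_apply, LinearEquiv.coe_coe, hbT', map_smul, LinearMap.smul_apply,
      Basis.linearMap_apply_apply]
    split_ifs with h
    · rw [hbT, h, smul_smul]
      congr 1
      field_simp [hμ0 j]
    · simp
  rw [LinearMap.trace_eq_matrix_trace k b.end, Matrix.trace, Fintype.sum_mul_sum,
    Fintype.sum_prod_type]
  refine Finset.sum_congr rfl fun i _ => Finset.sum_congr rfl fun j _ => ?_
  rw [Matrix.diag_apply, LinearMap.toMatrix_apply, AlgEquiv.toLinearMap_apply, key, map_smul,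
    Basis.repr_self]
  simp

open scoped ComplexOrder in
/-- The product `(∑ μᵢ)(∑ μᵢ⁻¹)` for roots of unity `μᵢ` is non-negative under any complex
embedding. -/
theorem exists_nonneg_of_sum_mul_sum_inv (σ : algebraicClosure ℚ k →ₐ[ℚ] ℂ) {n N : ℕ} (hN : 0 < N)
    {μ : Fin n → k} (hμ : ∀ i, μ i ^ N = 1) :
    ∃ z : algebraicClosure ℚ k, (z : k) = (∑ i, μ i) * ∑ i, (μ i)⁻¹ ∧ 0 ≤ σ z := by
  have hz (i) : μ i ∈ algebraicClosure ℚ k := by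
    rw [mem_algebraicClosure_iff]
    refine ⟨Polynomial.X ^ N - 1, ?_, by simp [hμ i]⟩
    exact (Polynomial.monic_X_pow_sub_C (1 : ℚ) hN.ne').ne_zero
  let z (i) : algebraicClosure ℚ k := ⟨μ i, hz i⟩
  refine ⟨(∑ i, z i) * ∑ i, (z i)⁻¹, ?_, ?_⟩
  · simp [z]
  · have h (i) : σ (z i)⁻¹ = star (σ (z i)) := by
      have h1 : z i ^ N = 1 := Subtype.ext (by simp [z, hμ i])
      rw [map_inv₀]
      exact Complex.inv_eq_conj (Complex.norm_eq_one_of_pow_eq_one (n := N)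
        (by rw [← map_pow, h1, map_one]) hN.ne')
    rw [map_mul, map_sum, map_sum]
    simp only [h]
    rw [← star_sum]
    exact mul_star_self_nonneg _

end TraceAutomorphism

end

section

open Module HopfAlgebra

section TraceAutomorphism

variable {k : Type*} [Field k] {ι : Type*} [DecidableEq ι] {V : ι → Type*}
  [∀ i, AddCommGroup (V i)] [∀ i, Module k (V i)]

/-- The diagonal block of an endomorphism of a product. -/
def AlgEquiv.diagBlock (τ : (Π i, End k (V i)) ≃ₐ[k] Π i, End k (V i)) (i : ι) :
    End k (V i) →ₗ[k] End k (V i) :=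
  LinearMap.proj i ∘ₗ τ.toLinearMap ∘ₗ LinearMap.single k (fun i => End k (V i)) i

namespace AlgEquiv

variable (τ : (Π i, End k (V i)) ≃ₐ[k] Π i, End k (V i))

theorem diagBlock_apply (i : ι) (X : End k (V i)) :
    τ.diagBlock i X = τ (Pi.single i X) i := rfl

theorem trace_eq_sum_diagBlock [Fintype ι] [∀ i, FiniteDimensional k (V i)] :
    LinearMap.trace k (Π i, End k (V i)) τ.toLinearMap =
      ∑ i, LinearMap.trace k (End k (V i)) (τ.diagBlock i) := by
  have h : τ.toLinearMap = ∑ i, (τ.toLinearMap ∘ₗ LinearMap.single k (fun i => End k (V i)) i) ∘ₗ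
      LinearMap.proj i := by
    refine LinearMap.ext fun x => ?_
    rw [LinearMap.sum_apply]
    simp only [LinearMap.comp_apply, LinearMap.proj_apply, LinearMap.coe_single]
    rw [← map_sum, Finset.univ_sum_single]
  conv_lhs => rw [h]
  rw [map_sum]
  refine Finset.sum_congr rfl fun i _ => ?_
  rw [LinearMap.trace_comp_comm']
  rfl

theorem diagBlock_mul (i : ι) (X Y : End k (V i)) :
    τ.diagBlock i (X * Y) = τ.diagBlock i X * τ.diagBlock i Y := by
  simp only [diagBlock_apply, Pi.single_mul, map_mul, Pi.mul_apply]

theorem single_one_mul (i : ι) (x : Π i, End k (V i)) :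
    Pi.single i 1 * x = Pi.single i (x i) := by
  rw [← Pi.single_mul_left, one_mul]

theorem mul_single_one (i : ι) (x : Π i, End k (V i)) :
    x * Pi.single i 1 = Pi.single i (x i) := by
  rw [← Pi.single_mul_right, mul_one]

theorem diagBlock_one [∀ i, Nontrivial (V i)] (i : ι) : τ.diagBlock i 1 = 0 ∨ τ.diagBlock i 1 = 1 := by
  have hc : τ.diagBlock i 1 ∈ Subalgebra.center k (End k (V i)) := by
    rw [Subalgebra.mem_center_iff]
    intro Y
    obtain ⟨y, hy⟩ := τ.surjective (Pi.single i Y)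
    have : τ (y * Pi.single i 1) i = τ (Pi.single i 1 * y) i := by
      rw [single_one_mul, mul_single_one]
    simpa [hy, diagBlock_apply] using this
  rw [Algebra.IsCentral.center_eq_bot, Algebra.mem_bot] at hc
  obtain ⟨c, hc⟩ := hc
  have h2 := τ.diagBlock_mul i 1 1
  rw [mul_one, ← hc, ← map_mul] at h2
  have h3 : c = c * c := (algebraMap k (End k (V i))).injective h2
  rcases eq_or_ne c 0 with rfl | h
  · left; rw [← hc, map_zero]
  · right
    rw [← hc, show c = 1 from (mul_left_cancel₀ h (by rw [mul_one]; exact h3)).symm, map_one]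

theorem apply_single_one_of_diagBlock_one {N : ℕ} (hN : 0 < N) (hτ : τ ^ N = 1) {i : ι}
    (h : τ.diagBlock i 1 = 1) : τ (Pi.single i 1) = Pi.single i 1 := by
  set e : Π i, End k (V i) := Pi.single i 1 with he
  have h1 : e * τ e = e := by rw [he, single_one_mul]; exact congrArg _ h
  have h1' : τ e * e = e := by rw [he, mul_single_one]; exact congrArg _ h
  have h2 (n : ℕ) : τ e * (τ ^ (n + 1)) e = τ e := by
    induction n with
    | zero =>
      have hee : e * e = e := by rw [he, single_one_mul, Pi.single_eq_same]
      rw [zero_add, pow_one, ← map_mul, hee]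
    | succ n ih =>
      have : (τ ^ (n + 1)) e * (τ ^ (n + 2)) e = (τ ^ (n + 1)) e := by
        rw [pow_succ τ (n + 1), AlgEquiv.mul_apply, ← map_mul, h1]
      rw [← ih, mul_assoc, this]
  obtain ⟨N, rfl⟩ := Nat.exists_eq_succ_of_ne_zero hN.ne'
  have := h2 N
  rw [← Nat.succ_eq_add_one, hτ, AlgEquiv.one_apply, h1'] at this
  exact this.symm

theorem apply_single_of_apply_single_one {i : ι} (h : τ (Pi.single i 1) = Pi.single i 1)
    (X : End k (V i)) : τ (Pi.single i X) = Pi.single i (τ.diagBlock i X) := by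
  have hX : Pi.single i 1 * Pi.single i X = (Pi.single i X : Π i, End k (V i)) := by
    rw [single_one_mul, Pi.single_eq_same]
  rw [← hX, map_mul, h, single_one_mul, diagBlock_apply]

open scoped ComplexOrder in
theorem exists_nonneg_trace_diagBlock [IsAlgClosed k] [CharZero k]
    [∀ i, FiniteDimensional k (V i)] [∀ i, Nontrivial (V i)]
    (σ : _root_.algebraicClosure ℚ k →ₐ[ℚ] ℂ) {N : ℕ} (hN : 0 < N) (hτ : τ ^ N = 1) (i : ι) :
    ∃ z : _root_.algebraicClosure ℚ k,
      (z : k) = LinearMap.trace k (End k (V i)) (τ.diagBlock i) ∧ 0 ≤ σ z := by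
  rcases τ.diagBlock_one i with h | h
  · refine ⟨0, ?_, by simp⟩
    have : τ.diagBlock i = 0 := by
      ext1 X
      rw [← one_mul X, diagBlock_mul, h, zero_mul, LinearMap.zero_apply]
    rw [this, map_zero, ZeroMemClass.coe_zero]
  have hs := τ.apply_single_of_apply_single_one (τ.apply_single_one_of_diagBlock_one hN hτ h)
  let f : End k (V i) →ₐ[k] End k (V i) := AlgHom.ofLinearMap (τ.diagBlock i) h (τ.diagBlock_mul i)
  have hinj : Function.Injective f := by
    intro X Y hXY
    refine Pi.single_injective i (τ.injective ?_)
    rw [hs, hs]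
    exact congrArg _ hXY
  have hsurj : Function.Surjective f :=
    LinearMap.injective_iff_surjective (f := τ.diagBlock i).mp hinj
  let α : End k (V i) ≃ₐ[k] End k (V i) := AlgEquiv.ofBijective f ⟨hinj, hsurj⟩
  have hα (n : ℕ) (X : End k (V i)) : Pi.single i ((α ^ n) X) = (τ ^ n) (Pi.single i X) := by
    induction n with
    | zero => simp
    | succ n ih =>
      rw [pow_succ', pow_succ', AlgEquiv.mul_apply, AlgEquiv.mul_apply, ← ih, hs]
      rfl
  have hα1 : α ^ N = 1 := by
    refine AlgEquiv.ext fun X => Pi.single_injective (M := fun i => End k (V i)) i ?_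
    rw [hα, hτ]; rfl
  obtain ⟨n, μ, hμ, ht⟩ := Module.End.trace_algEquiv_of_pow_eq_one α hN hα1
  obtain ⟨z, hz, hz0⟩ := exists_nonneg_of_sum_mul_sum_inv σ hN hμ
  exact ⟨z, by rw [hz, ← ht]; rfl, hz0⟩

theorem exists_trace_diagBlock_ne_zero [CharZero k] [Fintype ι]
    [∀ i, FiniteDimensional k (V i)] [∀ i, Nontrivial (V i)]
    {N : ℕ} (hN : 0 < N) (hτ : τ ^ N = 1) (χ : (Π i, End k (V i)) →ₐ[k] k)
    (hχ : ∀ x, χ (τ x) = χ x) :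
    ∃ i, LinearMap.trace k (End k (V i)) (τ.diagBlock i) ≠ 0 := by
  obtain ⟨i, hi⟩ : ∃ i, χ (Pi.single i 1) ≠ 0 := by
    by_contra! h
    have : χ (∑ i, Pi.single i (1 : End k (V i))) = 1 := by
      rw [show ∑ i, Pi.single i (1 : End k (V i)) = (1 : Π i, End k (V i)) from
        Finset.univ_sum_single 1, map_one]
    simp [h] at this
  refine ⟨i, ?_⟩
  have hi1 : χ (Pi.single i 1) = 1 := by
    have : χ (Pi.single i 1) * χ (Pi.single i 1) = χ (Pi.single i 1) * 1 := by
      rw [← map_mul, single_one_mul, Pi.single_eq_same, mul_one]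
    exact mul_left_cancel₀ hi this
  have h : τ.diagBlock i 1 = 1 := by
    refine (τ.diagBlock_one i).resolve_left fun h0 => hi ?_
    have : χ (Pi.single i 1 * τ (Pi.single i 1)) = 0 := by
      rw [single_one_mul, ← diagBlock_apply, h0, Pi.single_zero, map_zero]
    rwa [map_mul, hχ, hi1, mul_one, ← hi1] at this
  have hs := τ.apply_single_of_apply_single_one (τ.apply_single_one_of_diagBlock_one hN hτ h)
  let ψ : End k (V i) →ₐ[k] k := AlgHom.ofLinearMap
    (χ.toLinearMap ∘ₗ LinearMap.single k (fun i => End k (V i)) i) hi1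
    (fun X Y => by
      simp only [LinearMap.comp_apply, LinearMap.coe_single, Pi.single_mul, AlgHom.toLinearMap_apply,
        map_mul])
  have hinj : Function.Injective ψ := by
    let b := finBasis k (V i)
    have : Nonempty (Fin (finrank k (V i))) := b.index_nonempty
    let f := LinearMap.toMatrixAlgEquiv b
    have h : Function.Injective (ψ.comp f.symm.toAlgHom).toRingHom := RingHom.injective _
    intro X Y hXY
    exact f.injective (h (by simpa using! hXY))
  have hX : τ.diagBlock i = LinearMap.id := by
    ext1 X
    refine hinj ?_
    change χ (Pi.single i (τ.diagBlock i X)) = χ (Pi.single i X)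
    rw [← hs, hχ]
  rw [hX, LinearMap.trace_id, Nat.cast_ne_zero]
  exact (finrank_pos (R := k) (M := End k (V i))).ne'

open scoped ComplexOrder in
theorem trace_ne_zero [IsAlgClosed k] [CharZero k] [Fintype ι]
    [∀ i, FiniteDimensional k (V i)] [∀ i, Nontrivial (V i)]
    {N : ℕ} (hN : 0 < N) (hτ : τ ^ N = 1) (χ : (Π i, End k (V i)) →ₐ[k] k)
    (hχ : ∀ x, χ (τ x) = χ x) :
    LinearMap.trace k (Π i, End k (V i)) τ.toLinearMap ≠ 0 := by
  have : Algebra.IsAlgebraic ℚ (_root_.algebraicClosure ℚ k) := by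
    convert! algebraicClosure.isAlgebraic ℚ k
  let σ : _root_.algebraicClosure ℚ k →ₐ[ℚ] ℂ := IsAlgClosed.lift
  choose z hz hz0 using τ.exists_nonneg_trace_diagBlock σ hN hτ
  obtain ⟨i, hi⟩ := τ.exists_trace_diagBlock_ne_zero hN hτ χ hχ
  intro h
  rw [trace_eq_sum_diagBlock] at h
  have h1 : ∑ j, z j = 0 := Subtype.ext (by simpa [hz] using h)
  have h2 : ∑ j, σ (z j) = 0 := by rw [← map_sum, h1, map_zero]
  have h3 := (Finset.sum_eq_zero_iff_of_nonneg fun j _ => hz0 j).mp h2 i (Finset.mem_univ i)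
  rw [map_eq_zero] at h3
  exact hi (by rw [← hz, h3, ZeroMemClass.coe_zero])

end AlgEquiv

end TraceAutomorphism

namespace HopfAlgebra

variable (k H : Type*) [Field k] [Ring H] [HopfAlgebra k H]
  [FiniteDimensional k H] [IsSemisimpleRing H]

/-- The square of the antipode as an algebra automorphism. -/
noncomputable def antipodeSq : H ≃ₐ[k] H :=
  AlgEquiv.ofBijective (AlgHom.ofLinearMap (antipode k ∘ₗ antipode k) (by simp)
    (fun x y => by simp [antipode_mul_antidistrib]))
    ⟨(antipode_injective k H).comp (antipode_injective k H),
      (antipode_surjective k H).comp (antipode_surjective k H)⟩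

theorem antipodeSq_apply (x : H) : antipodeSq k H x = antipode k (antipode k x) := rfl

theorem traceIntegral_one_ne_zero [IsAlgClosed k] [CharZero k] : traceIntegral k H 1 ≠ 0 := by
  obtain ⟨n, d, hd, ⟨e⟩⟩ := IsSemisimpleRing.exists_algEquiv_pi_matrix_of_isAlgClosed k H
  let e' : H ≃ₐ[k] Π i, End k (Fin (d i) → k) :=
    e.trans (AlgEquiv.piCongrRight fun i => Matrix.toLinAlgEquiv')
  obtain ⟨N, hN, hpow⟩ := exists_antipode_sq_pow_eq_one k H
  let τ := (e'.symm.trans (antipodeSq k H)).trans e'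
  have hτ (m : ℕ) (x : Π i, End k (Fin (d i) → k)) :
      (τ ^ m) x = e' (((antipode k ∘ₗ antipode k : Module.End k H) ^ m) (e'.symm x)) := by
    induction m with
    | zero => simp
    | succ m ih =>
      rw [pow_succ', AlgEquiv.mul_apply, ih, pow_succ', Module.End.mul_apply]
      simp [τ, antipodeSq_apply]
  have h := τ.trace_ne_zero hN (AlgEquiv.ext fun x => by rw [hτ, hpow]; simp)
    ((Bialgebra.counitAlgHom k H).comp e'.symm.toAlgHom)
    (fun x => by simp [τ, antipodeSq_apply, counit_antipode])
  have h2 : τ.toLinearMap = e'.toLinearEquiv.conj (antipode k ∘ₗ antipode k) := rfl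
  rw [h2, LinearMap.trace_conj'] at h
  rw [traceIntegral_apply]
  convert h using 2
  ext x; simp

end HopfAlgebra

end

section

open TensorProduct Coalgebra HopfAlgebra

namespace HopfAlgebra

section Haar

variable (k H : Type*) [Field k] [Ring H] [HopfAlgebra k H]

/-- The integral on `H` normalized by `haar 1 = 1`. -/
noncomputable def haar : H →ₗ[k] k := (traceIntegral k H 1)⁻¹ • traceIntegral k H

/-- The bilinear form `(x, y) ↦ haar (S x * y)`. -/
noncomputable def haarForm : H →ₗ[k] H →ₗ[k] k :=
  (LinearMap.mul k H).compr₂ (haar k H) ∘ₗ antipode k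

variable {k H}

theorem haarForm_apply (x y : H) : haarForm k H x y = haar k H (antipode k x * y) := rfl

variable [FiniteDimensional k H]

theorem haar_mul (h y : H) : haar k H (h * y) = haar k H (antipode k (antipode k y) * h) := by
  rw [haar, LinearMap.smul_apply, LinearMap.smul_apply, traceIntegral_mul]

theorem contractL_haar_comul (h : H) : contractL (haar k H) (comul h) = haar k H h • (1 : H) := by
  have (c : k) (p : H →ₗ[k] k) (u : H ⊗[k] H) : contractL (c • p) u = c • contractL p u := by
    simp [contractL, LinearMap.rTensor_smul]
  rw [haar, this, contractL_traceIntegral_comul, LinearMap.smul_apply, smul_assoc]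

theorem contractL_haarForm_comul (x y : H) :
    contractL (haarForm k H x) (comul y) = contractR ((haarForm k H).flip y) (comul x) := by
  have : haarForm k H x = haar k H ∘ₗ LinearMap.mulLeft k (antipode k x) := rfl
  rw [this, ← contractL_tmul_one_mul, ← sum_one_tmul_mul_comul_antipode (ℛ k x), Finset.sum_mul, map_sum]
  conv_rhs => rw [← (ℛ k x).eq]
  simp only [mul_assoc, contractL_one_tmul_mul, ← Bialgebra.comul_mul, contractL_haar_comul,
    map_sum, contractR_tmul, LinearMap.flip_apply, haarForm_apply, mul_smul_comm, mul_one]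

theorem haarForm_contractR (q : H →ₗ[k] k) (x y : H) :
    haarForm k H x (contractR q (comul y)) = haarForm k H (contractL q (comul x)) y := by
  rw [← apply_contractL, contractL_haarForm_comul, ← LinearMap.flip_apply, apply_contractL]

theorem haarForm_mul_right (x y a : H) :
    haarForm k H x (y * a) = haarForm k H (x * antipode k a) y := by
  rw [haarForm_apply, haarForm_apply, ← mul_assoc, haar_mul, antipode_mul_antidistrib, mul_assoc]

variable [IsSemisimpleRing H] [IsAlgClosed k] [CharZero k]

theorem haar_one : haar k H 1 = 1 := by
  simp [haar, inv_mul_cancel₀ (traceIntegral_one_ne_zero k H)]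

theorem haar_antipode (h : H) : haar k H (antipode k h) = haar k H h := by
  have := apply_contractL (haar k H) (haar k H ∘ₗ antipode k) (comul h)
  rw [contractR_comp_antipode_comul contractL_haar_comul, contractL_haar_comul] at this
  simpa [haar_one] using this.symm

theorem contractR_haar_comul (h : H) : contractR (haar k H) (comul h) = haar k H h • (1 : H) := by
  have h0 : haar k H ∘ₗ antipode k = haar k H := LinearMap.ext haar_antipode
  simpa only [h0] using contractR_comp_antipode_comul (contractL_haar_comul (k := k) (H := H)) h

theorem haarForm_contractL (q : H →ₗ[k] k) (x y : H) :
    haarForm k H x (contractL q (comul y)) =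
      haarForm k H (contractR (q ∘ₗ antipode k ∘ₗ antipode k) (comul x)) y := by
  rw [haarForm_apply, ← contractL_one_tmul_mul, apply_contractL,
    ← sum_antipode_antipode_tmul_one_mul_comul (ℛ k x), Finset.sum_mul, map_sum, map_sum]
  conv_rhs => rw [← (ℛ k x).eq]
  simp only [mul_assoc, contractR_tmul_one_mul, ← Bialgebra.comul_mul, contractR_haar_comul,
    map_sum, contractR_tmul, LinearMap.sum_apply, map_smul, LinearMap.smul_apply, haarForm_apply,
    mul_smul_comm, mul_one, LinearMap.comp_apply, smul_eq_mul, mul_comm]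

end Haar

end HopfAlgebra

end

section

open TensorProduct Coalgebra HopfAlgebra

namespace MackeyPaper

section Subcoalgebra

variable {k : Type} [Field k]
variable {H : Type} [Ring H] [HopfAlgebra k H]

theorem contract_mem_of_mem_range {C : Submodule k H} {u : H ⊗[k] H}
    (hu : u ∈ LinearMap.range (TensorProduct.map C.subtype C.subtype)) (q : H →ₗ[k] k) :
    contractL q u ∈ C ∧ contractR q u ∈ C := by
  obtain ⟨v, rfl⟩ := hu
  induction v with
  | zero => simp
  | add v w hv hw =>
    simp only [map_add]
    exact ⟨C.add_mem hv.1 hw.1, C.add_mem hv.2 hw.2⟩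
  | tmul x y => simp [C.smul_mem]

theorem range_map_subtype_mono {C D : Submodule k H} (h : C ≤ D) :
    LinearMap.range (TensorProduct.map C.subtype C.subtype) ≤
      LinearMap.range (TensorProduct.map D.subtype D.subtype) := by
  rintro _ ⟨v, rfl⟩
  refine ⟨TensorProduct.map (Submodule.inclusion h) (Submodule.inclusion h) v, ?_⟩
  rw [← LinearMap.comp_apply, ← TensorProduct.map_comp]
  rfl

theorem IsSubcoalgebra.sSup {s : Set (Submodule k H)} (hs : ∀ C ∈ s, IsSubcoalgebra k H C) :
    IsSubcoalgebra k H (sSup s) := by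
  have : SupSet.sSup s ≤ (LinearMap.range (TensorProduct.map (SupSet.sSup s).subtype
      (SupSet.sSup s).subtype)).comap (comul (R := k)) :=
    sSup_le fun C hC c hc => range_map_subtype_mono (le_sSup hC) (hs C hC c hc)
  exact this

theorem IsSubcoalgebra.mul {C D : Submodule k H} (hC : IsSubcoalgebra k H C)
    (hD : IsSubcoalgebra k H D) : IsSubcoalgebra k H (C * D) := by
  have : C * D ≤ (LinearMap.range (TensorProduct.map (C * D).subtype
      (C * D).subtype)).comap (comul (R := k)) := by
    refine Submodule.mul_le.mpr fun x hx y hy => ?_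
    obtain ⟨u, hu⟩ := hC x hx
    obtain ⟨v, hv⟩ := hD y hy
    rw [Submodule.mem_comap, Bialgebra.comul_mul, ← hu, ← hv]
    clear hu hv
    induction u with
    | zero => simp
    | add u u' hu hu' => rw [map_add, add_mul]; exact add_mem hu hu'
    | tmul a b =>
      induction v with
      | zero => simp
      | add v v' hv hv' => rw [map_add, mul_add]; exact add_mem hv hv'
      | tmul c d =>
        exact ⟨⟨a * c, Submodule.mul_mem_mul a.2 c.2⟩ ⊗ₜ ⟨b * d, Submodule.mul_mem_mul b.2 d.2⟩,
          by simp⟩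
  exact this

/-- The orthogonal complement with respect to `haarForm`. -/
noncomputable def orth (X : Submodule k H) : Submodule k H :=
  ⨅ x ∈ X, LinearMap.ker (haarForm k H x)

theorem mem_orth {X : Submodule k H} {y : H} : y ∈ orth X ↔ ∀ x ∈ X, haarForm k H x y = 0 := by
  simp [orth]

variable [FiniteDimensional k H]

theorem mem_range_map_subtype {C : Submodule k H} {u : H ⊗[k] H}
    (h : ∀ q : H →ₗ[k] k, contractL q u ∈ C ∧ contractR q u ∈ C) :
    u ∈ LinearMap.range (TensorProduct.map C.subtype C.subtype) := by
  let b := Module.finBasis k H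
  have hb (z : H) : ∑ j, b.coord j z • b j = z := b.sum_repr z
  obtain ⟨e, he⟩ := C.subtype.exists_leftInverse_of_injective C.ker_subtype
  have he' (c : H) (hc : c ∈ C) : (e c : H) = c :=
    congrArg Subtype.val (LinearMap.congr_fun he ⟨c, hc⟩)
  have hl (u : H ⊗[k] H) : ∑ j, b j ⊗ₜ contractL (b.coord j) u = u := by
    induction u with
    | zero => simp
    | add u v hu hv => simp only [map_add, tmul_add, Finset.sum_add_distrib, hu, hv]
    | tmul x y =>
      simp only [contractL_tmul, tmul_smul, smul_tmul', ← sum_tmul, hb]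
  have hr (u : H ⊗[k] H) : ∑ j, contractR (b.coord j) u ⊗ₜ b j = u := by
    induction u with
    | zero => simp
    | add u v hu hv => simp only [map_add, add_tmul, Finset.sum_add_distrib, hu, hv]
    | tmul x y =>
      simp only [contractR_tmul, smul_tmul, ← tmul_sum, hb]
  have h1 : LinearMap.lTensor H (C.subtype ∘ₗ e) u = u := by
    conv_lhs => rw [← hl u]
    conv_rhs => rw [← hl u]
    simp [he' _ (h _).1]
  have h2 : LinearMap.rTensor H (C.subtype ∘ₗ e) u = u := by
    conv_lhs => rw [← hr u]
    conv_rhs => rw [← hr u]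
    simp [he' _ (h _).2]
  refine ⟨TensorProduct.map e e u, ?_⟩
  rw [← LinearMap.comp_apply, ← TensorProduct.map_comp, ← LinearMap.lTensor_comp_rTensor,
    LinearMap.comp_apply, h2, h1]

theorem isSubcoalgebra_of_contract {C : Submodule k H}
    (h : ∀ c ∈ C, ∀ q : H →ₗ[k] k, contractL q (comul c) ∈ C ∧ contractR q (comul c) ∈ C) :
    IsSubcoalgebra k H C :=
  fun c hc => mem_range_map_subtype (h c hc)

theorem IsSubcoalgebra.inf {C D : Submodule k H} (hC : IsSubcoalgebra k H C)
    (hD : IsSubcoalgebra k H D) : IsSubcoalgebra k H (C ⊓ D) :=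
  isSubcoalgebra_of_contract fun c hc q =>
    have h1 := contract_mem_of_mem_range (hC c hc.1) q
    have h2 := contract_mem_of_mem_range (hD c hc.2) q
    ⟨⟨h1.1, h2.1⟩, h1.2, h2.2⟩

theorem IsSubcoalgebra.exists_isSimpleSubcoalgebra_le {Y : Submodule k H}
    (hY : IsSubcoalgebra k H Y) (h0 : Y ≠ ⊥) : ∃ C ≤ Y, IsSimpleSubcoalgebra k H C := by
  obtain ⟨C, ⟨hCY, hC, hC0⟩, hmin⟩ := (wellFounded_lt (α := Submodule k H)).has_min
    {C | C ≤ Y ∧ IsSubcoalgebra k H C ∧ C ≠ ⊥} ⟨Y, le_rfl, hY, h0⟩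
  exact ⟨C, hCY, hC, hC0, fun D hDC hD hD0 =>
    hDC.eq_of_not_lt (hmin D ⟨hDC.trans hCY, hD, hD0⟩)⟩

theorem IsSimpleSubcoalgebra.le_or_disjoint {C Y : Submodule k H}
    (hC : IsSimpleSubcoalgebra k H C) (hY : IsSubcoalgebra k H Y) : C ≤ Y ∨ Disjoint C Y := by
  rw [disjoint_iff, or_iff_not_imp_right]
  exact fun h => inf_eq_left.mp (hC.2.2 _ inf_le_left (hC.1.inf hY) h)

theorem haarForm_eq_zero_of_disjoint {C D : Submodule k H} (hC : IsSubcoalgebra k H C)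
    (hD : IsSubcoalgebra k H D) (h : Disjoint C D) {x y : H} (hx : x ∈ C) (hy : y ∈ D) :
    haarForm k H x y = 0 := by
  have h0 : contractL (haarForm k H x) (comul y) = 0 := Submodule.disjoint_def.mp h _
    (contractL_haarForm_comul (k := k) x y ▸ (contract_mem_of_mem_range (hC x hx) _).2)
    (contract_mem_of_mem_range (hD y hy) _).1
  have h1 := congrArg (counit (R := k)) h0
  rw [apply_contractL] at h1
  have h2 : contractR (counit (R := k)) (comul y) = y := by
    simp [contractR]
  rwa [h2, map_zero] at h1

variable [IsSemisimpleRing H] [CharZero k] [IsAlgClosed k]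

theorem disjoint_of_haarForm_eq_zero {C D : Submodule k H} (hC : IsSubcoalgebra k H C)
    (hD : IsSubcoalgebra k H D) (h : ∀ x ∈ C, ∀ y ∈ D, haarForm k H x y = 0) : Disjoint C D := by
  have hZ := hC.inf hD
  have hε (z) (hz : z ∈ C ⊓ D) : counit (R := k) z = 0 := by
    have h1 : haarForm k H 1 1 * counit (R := k) z =
        TensorProduct.lift (haarForm k H) (comul z) := by
      have h2 : TensorProduct.lift (haarForm k H) =
        haar k H ∘ₗ LinearMap.mul' k H ∘ₗ LinearMap.rTensor H (antipode k) := by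
        ext x y; simp [haarForm_apply]
      rw [h2]
      simp [haarForm_apply, Algebra.algebraMap_eq_smul_one, mul_comm]
    obtain ⟨v, hv⟩ := hZ z hz
    have h3 : TensorProduct.lift (haarForm k H) (comul z) = 0 := by
      rw [← hv]
      clear hv
      induction v with
      | zero => simp
      | add v w hv hw => rw [map_add, map_add, hv, hw, add_zero]
      | tmul x y => simpa using h x x.2.1 y y.2.2
    simpa [haarForm_apply, haar_one, h3] using h1
  rw [Submodule.disjoint_def]
  intro z hzC hzD
  obtain ⟨v, hv⟩ := hZ z ⟨hzC, hzD⟩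
  have h1 : contractL (counit (R := k)) (comul z) = z := by
    simp [contractL]
  rw [← h1, ← hv]
  clear h1 hv
  induction v with
  | zero => simp
  | add v w hv hw => rw [map_add, map_add, hv, hw, add_zero]
  | tmul x y => simp [hε x x.2]

theorem IsSubcoalgebra.orth {X : Submodule k H} (hX : IsSubcoalgebra k H X) :
    IsSubcoalgebra k H (orth X) :=
  isSubcoalgebra_of_contract fun y hy q => by
    rw [mem_orth] at hy
    refine ⟨mem_orth.mpr fun x hx => ?_, mem_orth.mpr fun x hx => ?_⟩
    · rw [haarForm_contractL]
      exact hy _ (contract_mem_of_mem_range (hX x hx) _).2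
    · rw [haarForm_contractR]
      exact hy _ (contract_mem_of_mem_range (hX x hx) _).1

theorem IsSubcoalgebra.isCompl_orth {X : Submodule k H} (hX : IsSubcoalgebra k H X) :
    IsCompl X (MackeyPaper.orth X) := by
  have hd := disjoint_of_haarForm_eq_zero hX hX.orth fun x hx y hy => mem_orth.mp hy x hx
  refine ⟨hd, codisjoint_iff.mpr (eq_top_iff.mpr fun h _ => ?_)⟩
  let T : H →ₗ[k] Module.Dual k X := ((haarForm k H) ∘ₗ X.subtype).flip
  have hT (h : H) (x : X) : T h x = haarForm k H x h := rfl
  have hinj : Function.Injective (T ∘ₗ X.subtype) := by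
    rw [injective_iff_map_eq_zero]
    refine fun x hx => Subtype.ext (Submodule.disjoint_def.mp hd x x.2 (mem_orth.mpr fun y hy => ?_))
    exact LinearMap.congr_fun hx ⟨y, hy⟩
  obtain ⟨x, hx⟩ := (LinearMap.injective_iff_surjective_of_finrank_eq_finrank
      (Subspace.dual_finrank_eq (K := k) (V := X)).symm).mp hinj (T h)
  refine Submodule.mem_sup.mpr ⟨x, x.2, h - x, mem_orth.mpr fun y hy => ?_, by abel⟩
  rw [map_sub, sub_eq_zero]
  exact (LinearMap.congr_fun hx ⟨y, hy⟩).symm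

theorem sSup_isSimpleSubcoalgebra : sSup {C : Submodule k H | IsSimpleSubcoalgebra k H C} = ⊤ := by
  have hT : IsSubcoalgebra k H (sSup {C : Submodule k H | IsSimpleSubcoalgebra k H C}) :=
    IsSubcoalgebra.sSup fun C hC => hC.1
  by_contra h
  have h0 : orth (sSup {C : Submodule k H | IsSimpleSubcoalgebra k H C}) ≠ ⊥ := fun h0 =>
    h (by simpa [h0] using hT.isCompl_orth.sup_eq_top)
  obtain ⟨C, hC, hCs⟩ := hT.orth.exists_isSimpleSubcoalgebra_le h0
  exact hCs.2.1 (le_bot_iff.mp (hT.isCompl_orth.disjoint (le_sSup hCs) hC))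

end Subcoalgebra

end MackeyPaper

end

section

open TensorProduct Coalgebra HopfAlgebra

namespace MackeyPaper

section Coset

variable {k : Type} [Field k] {H : Type} [Ring H] [HopfAlgebra k H]
  {K : Subalgebra k H}

theorem le_CKsub (C : Submodule k H) : C ≤ CKsub k H K C := fun x hx => by
  simpa [CKsub] using Submodule.mul_mem_mul hx (show (1 : H) ∈ K.toSubmodule from K.one_mem)

theorem mul_mem_CKsub {C : Submodule k H} {x a : H} (hx : x ∈ CKsub k H K C) (ha : a ∈ K) :
    x * a ∈ CKsub k H K C := by
  have : CKsub k H K C * K.toSubmodule = CKsub k H K C := by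
    rw [CKsub, mul_assoc, K.isIdempotentElem_toSubmodule.eq]
  exact this ▸ Submodule.mul_mem_mul hx ha

theorem CKsub_le {C Y : Submodule k H} (h : C ≤ Y) (hY : ∀ y ∈ Y, ∀ a ∈ K, y * a ∈ Y) :
    CKsub k H K C ≤ Y :=
  Submodule.mul_le.mpr fun x hx a ha => hY x (h hx) a ha

theorem IsHopfSubalgebra.isSubcoalgebra_CKsub (hK : IsHopfSubalgebra k H K) {C : Submodule k H}
    (hC : IsSubcoalgebra k H C) : IsSubcoalgebra k H (CKsub k H K C) :=
  hC.mul hK.1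

theorem sum_mul_adActR (a c : H) :
    ∑ i ∈ (ℛ k c).index, (ℛ k c).left i * adActR k H ((ℛ k c).right i) a = a * c := by
  let r := ℛ k c
  have hG (y : H) : adActR k H y a =
      ∑ j ∈ (ℛ k y).index, antipode k ((ℛ k y).left j) * a * (ℛ k y).right j := by
    rw [adActR, LinearMap.comp_apply, ← (ℛ k y).eq]
    simp [LinearMap.sum_apply]
  let F : H ⊗[k] (H ⊗[k] H) →ₗ[k] H := LinearMap.mul' k H ∘ₗ LinearMap.lTensor H
    (LinearMap.mul' k H ∘ₗ TensorProduct.map (LinearMap.mulRight k a ∘ₗ antipode k) LinearMap.id)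
  have hF (x y z : H) : F (x ⊗ₜ (y ⊗ₜ z)) = x * (antipode k y * a * z) := by simp [F]
  have h1 := congrArg F
    (sum_tmul_tmul_eq r (fun i => ℛ k (r.left i)) (fun i => ℛ k (r.right i)))
  simp only [map_sum, hF] at h1
  have h2 (i) : ∑ j ∈ (ℛ k (r.left i)).index, (ℛ k (r.left i)).left j *
      (antipode k ((ℛ k (r.left i)).right j) * a * r.right i) =
      a * counit (R := k) (r.left i) • r.right i := by
    simp only [← mul_assoc, ← Finset.sum_mul, sum_mul_antipode_eq_smul]
    simp
  simp only [h2, ← Finset.mul_sum, sum_counit_smul] at h1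
  rw [h1]
  exact Finset.sum_congr rfl fun i _ => by rw [hG, Finset.mul_sum]

theorem IsNormalHopfSubalgebra.mul_mem (hK : IsNormalHopfSubalgebra k H K) {Y : Submodule k H}
    (hY : IsSubcoalgebra k H Y) (hYK : ∀ y ∈ Y, ∀ a ∈ K, y * a ∈ Y) {a y : H} (ha : a ∈ K)
    (hy : y ∈ Y) : a * y ∈ Y := by
  let G : H ⊗[k] H →ₗ[k] H := LinearMap.mul' k H ∘ₗ LinearMap.lTensor H ((adActR k H).flip a)
  have hG : G (comul y) = a * y := by
    rw [← sum_mul_adActR (k := k), ← (ℛ k y).eq]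
    simp [G]
  obtain ⟨v, hv⟩ := hY y hy
  rw [← hG, ← hv]
  clear hG hv
  induction v with
  | zero => simp
  | add v w hv hw => rw [map_add, map_add]; exact Y.add_mem hv hw
  | tmul b c => simpa [G] using hYK b b.2 _ (hK.2 c a ha).2

variable [FiniteDimensional k H]

theorem orth_mul_mem (hK : IsHopfSubalgebra k H K) {X : Submodule k H}
    (hXK : ∀ x ∈ X, ∀ a ∈ K, x * a ∈ X) : ∀ y ∈ orth X, ∀ a ∈ K, y * a ∈ orth X :=
  fun y hy a ha => mem_orth.mpr fun x hx => by
    rw [haarForm_mul_right]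
    exact mem_orth.mp hy _ (hXK x hx _ (hK.2 a ha))

variable [IsSemisimpleRing H] [CharZero k] [IsAlgClosed k]

theorem IsSimpleSubcoalgebra.le_or_disjoint_CKsub (hK : IsHopfSubalgebra k H K)
    {C Y : Submodule k H} (hC : IsSimpleSubcoalgebra k H C) (hY : IsSubcoalgebra k H Y)
    (hYK : ∀ y ∈ Y, ∀ a ∈ K, y * a ∈ Y) : C ≤ Y ∨ Disjoint (CKsub k H K C) Y := by
  refine (hC.le_or_disjoint hY).imp_right fun h => ?_
  refine (disjoint_of_haarForm_eq_zero hY (hK.isSubcoalgebra_CKsub hC.1) ?_).symm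
  have : CKsub k H K C ≤ orth Y := CKsub_le
    (fun x hx => mem_orth.mpr fun y hy => haarForm_eq_zero_of_disjoint hY hC.1 h.symm hy hx)
    (orth_mul_mem hK hYK)
  exact fun y hy x hx => mem_orth.mp (this hx) y hy

theorem IsSimpleSubcoalgebra.CKsub_eq_or_disjoint (hK : IsHopfSubalgebra k H K)
    {C D : Submodule k H} (hC : IsSimpleSubcoalgebra k H C) (hD : IsSimpleSubcoalgebra k H D) :
    CKsub k H K C = CKsub k H K D ∨ Disjoint (CKsub k H K C) (CKsub k H K D) := by
  have h (C : Submodule k H) : ∀ y ∈ CKsub k H K C, ∀ a ∈ K, y * a ∈ CKsub k H K C :=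
    fun y hy a ha => mul_mem_CKsub hy ha
  have hC' := hC.le_or_disjoint_CKsub hK (hK.isSubcoalgebra_CKsub hD.1) (h D)
  have hD' := hD.le_or_disjoint_CKsub hK (hK.isSubcoalgebra_CKsub hC.1) (h C)
  rcases hC', hD' with ⟨h1 | h1, h2 | h2⟩
  · exact .inl (le_antisymm (CKsub_le h1 (h D)) (CKsub_le h2 (h C)))
  · exact .inr h2.symm
  · exact .inr h1
  · exact .inr h1

theorem IsSimpleSubcoalgebra.disjoint_of_not_le (hK : IsHopfSubalgebra k H K)
    {C : Submodule k H} (hC : IsSimpleSubcoalgebra k H C) (h : ¬ C ≤ K.toSubmodule) :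
    Disjoint (CKsub k H K C) K.toSubmodule :=
  (hC.le_or_disjoint_CKsub hK hK.1 fun _ hy _ ha => K.mul_mem hy ha).resolve_left h

/-- The `K`-bimodule projection of `H` onto a union of right cosets of `K`. -/
theorem IsNormalHopfSubalgebra.exists_projection (hK : IsNormalHopfSubalgebra k H K)
    {X : Submodule k H} (hX : IsSubcoalgebra k H X) (hXK : ∀ x ∈ X, ∀ a ∈ K, x * a ∈ X) :
    ∃ p : H →ₗ[k] H, (∀ h, p h ∈ X) ∧ (∀ x ∈ X, p x = x) ∧
      (∀ Y, IsSubcoalgebra k H Y → Disjoint X Y → ∀ y ∈ Y, p y = 0) ∧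
      (∀ a ∈ K, ∀ h, p (h * a) = p h * a) ∧ (∀ a ∈ K, ∀ h, p (a * h) = a * p h) := by
  have hc := hX.isCompl_orth
  let p : H →ₗ[k] H := X.projection (orth X) hc
  have hp (x y : H) (hx : x ∈ X) (hy : y ∈ orth X) : p (x + y) = x := by
    rw [map_add, X.projection_apply_left hc ⟨x, hx⟩, X.projection_apply_right hc ⟨y, hy⟩, add_zero]
  have hdec (h : H) : ∃ x ∈ X, ∃ y ∈ orth X, x + y = h :=
    Submodule.mem_sup.mp (hc.sup_eq_top ▸ Submodule.mem_top)
  have hO := orth_mul_mem hK.1 hXK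
  refine ⟨p, fun h => X.projection_apply_mem hc h, fun x hx => ?_,
    fun Y hY hXY y hy => ?_, fun a ha h => ?_, fun a ha h => ?_⟩
  · simpa using hp x 0 hx (zero_mem _)
  · simpa using hp 0 y (zero_mem _) (mem_orth.mpr fun x hx =>
      haarForm_eq_zero_of_disjoint hX hY hXY hx hy)
  · obtain ⟨x, hx, y, hy, rfl⟩ := hdec h
    rw [add_mul, hp _ _ (hXK x hx a ha) (hO y hy a ha), hp _ _ hx hy]
  · obtain ⟨x, hx, y, hy, rfl⟩ := hdec h
    rw [mul_add, hp _ _ (hK.mul_mem hX hXK ha hx) (hK.mul_mem hX.orth hO ha hy), hp _ _ hx hy]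

end Coset

end MackeyPaper

end

section

open TensorProduct

namespace MackeyPaper

section Induced

universe v

variable {k : Type} [Field k] {H : Type} [Ring H] [HopfAlgebra k H]
  {K : Subalgebra k H} {M : Type v} [AddCommGroup M] [Module k M] [Module ↥K M]
  {N : Type*} [AddCommGroup N] [Module k N]

variable (K M) in
/-- The class of `h ⊗ m` in the induced module, bilinear in `h` and `m`. -/
noncomputable def indMk : H →ₗ[k] M →ₗ[k] Ind k H K M :=
  (TensorProduct.mk k H M).compr₂ ((indRel k H K M).mkQ.restrictScalars k)

theorem indMk_apply (h : H) (m : M) :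
    indMk K M h m = Submodule.Quotient.mk (h ⊗ₜ[k] m) := rfl

theorem smul_indMk (h' h : H) (m : M) : h' • indMk K M h m = indMk K M (h' * h) m := rfl

theorem indMk_mul (h : H) (a : K) (m : M) : indMk K M (h * a) m = indMk K M h (a • m) := by
  have h1 : indMk K M (a : H) m = indMk K M 1 (a • m) :=
    (Submodule.Quotient.eq _).mpr (Submodule.subset_span ⟨a, m, rfl⟩)
  rw [← smul_indMk, h1, smul_indMk, mul_one]

theorem Ind.induction_on {p : Ind k H K M → Prop} (z : Ind k H K M)
    (h0 : p 0) (hadd : ∀ z w, p z → p w → p (z + w)) (hmk : ∀ h m, p (indMk K M h m)) : p z := by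
  obtain ⟨u, rfl⟩ := Submodule.Quotient.mk_surjective _ z
  induction u with
  | zero => exact h0
  | add u v hu hv => exact hadd _ _ hu hv
  | tmul h m => exact hmk h m

theorem map₂_indMk_top : Submodule.map₂ (indMk K M) (⊤ : Submodule k H) ⊤ = ⊤ := by
  refine eq_top_iff.mpr fun z _ => ?_
  induction z using Ind.induction_on with
  | h0 => exact zero_mem _
  | hadd z w hz hw => exact add_mem (hz trivial) (hw trivial)
  | hmk h m => exact Submodule.apply_mem_map₂ _ trivial trivial

theorem finiteDimensional_ind [FiniteDimensional k H] [Module.Finite k M] :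
    FiniteDimensional k (Ind k H K M) := by
  have h := Submodule.FG.map₂ (indMk K M) (Module.Finite.fg_top (R := k) (M := H))
    (Module.Finite.fg_top (R := k) (M := M))
  rw [map₂_indMk_top] at h
  exact ⟨h⟩

theorem exists_eq_smul_of_isSimpleModule_ind [IsAlgClosed k] [FiniteDimensional k H]
    [Module.Finite k M]
    (hS : IsSimpleModule H (Ind k H K M)) (F : Ind k H K M →ₗ[H] Ind k H K M) :
    ∃ c : k, ∀ z, F z = c • z := by
  have := finiteDimensional_ind (k := k) (K := K) (M := M)
  obtain ⟨c, hc⟩ := (IsSimpleModule.algebraMap_end_bijective_of_isAlgClosed k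
    (A := H) (V := Ind k H K M)).2 F
  exact ⟨c, fun z => by rw [← hc, Module.algebraMap_end_apply]⟩

theorem conjMsub_eq_map₂ (C : Submodule k H) :
    conjMsub k H K M C = Submodule.map₂ (indMk K M) (CKsub k H K C) ⊤ := by
  rw [Submodule.map₂_eq_span_image2, conjMsub]
  congr 1
  ext z
  simp only [Set.mem_ofPred_eq, Set.mem_image2, SetLike.mem_coe, Submodule.mem_top, true_and,
    exists_prop, indMk_apply, eq_comm]

theorem exists_indLift (F : H →ₗ[k] M →ₗ[k] N) (hF : ∀ h (a : K) m, F (h * a) m = F h (a • m)) :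
    ∃ G : Ind k H K M →ₗ[k] N, ∀ h m, G (indMk K M h m) = F h m := by
  have hle : (indRel k H K M).restrictScalars k ≤ LinearMap.ker (TensorProduct.lift F) := by
    intro z hz
    suffices ∀ h : H, TensorProduct.lift F (h • z) = 0 by simpa using this 1
    replace hz : z ∈ Submodule.span H _ := hz
    induction hz using Submodule.span_induction with
    | mem z hz =>
      obtain ⟨a, m, rfl⟩ := hz
      intro h
      simp [smul_sub, TensorProduct.smul_tmul', hF]
    | zero => simp
    | add z w _ _ hz hw => intro h; rw [smul_add, map_add, hz, hw, add_zero]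
    | smul h' z _ hz => intro h; rw [smul_smul, hz]
  exact ⟨((indRel k H K M).restrictScalars k).liftQ _ hle ∘ₗ
    (Submodule.Quotient.restrictScalarsEquiv k (indRel k H K M)).symm.toLinearMap,
    fun h m => by simp [indMk_apply]⟩

/-- Frobenius reciprocity: a `K`-map `M → M↑` extends to an `H`-endomorphism of `M↑`. -/
theorem exists_indEnd (f : M →ₗ[k] Ind k H K M) (hf : ∀ (a : K) m, f (a • m) = (a : H) • f m) :
    ∃ F : Ind k H K M →ₗ[H] Ind k H K M, ∀ h m, F (indMk K M h m) = h • f m := by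
  obtain ⟨G, hG⟩ := exists_indLift (K := K)
    ((Algebra.lsmul k k (Ind k H K M)).toLinearMap.compl₂ f : H →ₗ[k] M →ₗ[k] Ind k H K M)
    (fun h a m => by simp [hf])
  have hG (h : H) (m : M) : G (indMk K M h m) = h • f m := hG h m
  refine ⟨{ G with map_smul' := fun h z => ?_ }, hG⟩
  change G (h • z) = h • G z
  induction z using Ind.induction_on with
  | h0 => simp
  | hadd z w hz hw => rw [smul_add, map_add, map_add, hz, hw, smul_add]
  | hmk h' m => rw [smul_indMk, hG, hG, mul_smul]

/-- A `K`-bimodule endomorphism of `H` induces a `K`-module endomorphism of `M↑`. -/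
theorem exists_indMap (p : H →ₗ[k] H) (hpr : ∀ a ∈ K, ∀ h, p (h * a) = p h * a)
    (hpl : ∀ a ∈ K, ∀ h, p (a * h) = a * p h) :
    ∃ P : Ind k H K M →ₗ[k] Ind k H K M, (∀ h m, P (indMk K M h m) = indMk K M (p h) m) ∧
      ∀ (a : K) z, P ((a : H) • z) = (a : H) • P z := by
  obtain ⟨P, hP⟩ := exists_indLift (K := K) (indMk K M ∘ₗ p) (fun h a m => by
    simp [hpr a a.2, indMk_mul])
  have hP (h : H) (m : M) : P (indMk K M h m) = indMk K M (p h) m := hP h m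
  refine ⟨P, hP, fun a z => ?_⟩
  induction z using Ind.induction_on with
  | h0 => simp
  | hadd z w hz hw => rw [smul_add, map_add, map_add, hz, hw, smul_add]
  | hmk h' m => rw [smul_indMk, hP, hP, hpl a a.2, smul_indMk]

variable (K M) in
/-- The class of `x ⊗ m` in the conjugate module, bilinear in `x` and `m`. -/
noncomputable def conjMk (C : Submodule k H) : CKsub k H K C →ₗ[k] M →ₗ[k] ConjM k H K M C :=
  (TensorProduct.mk k (CKsub k H K C) M).compr₂ (conjRel k H K M C).mkQ

theorem conjMk_mul {C : Submodule k H} (x : CKsub k H K C) (a : K) (m : M) :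
    conjMk K M C ⟨x * a, mul_mem_CKsub x.2 a.2⟩ m = conjMk K M C x (a • m) :=
  (Submodule.Quotient.eq _).mpr (Submodule.subset_span ⟨x, a, m, mul_mem_CKsub x.2 a.2, rfl⟩)

theorem ConjM.hom_ext {C : Submodule k H} {f g : ConjM k H K M C →ₗ[k] N}
    (h : ∀ x m, f (conjMk K M C x m) = g (conjMk K M C x m)) : f = g :=
  Submodule.linearMap_qext _ (TensorProduct.ext' h)

theorem exists_conjToInd (C : Submodule k H) :
    ∃ G : ConjM k H K M C →ₗ[k] Ind k H K M, ∀ x m, G (conjMk K M C x m) = indMk K M (x : H) m := by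
  let F : CKM k H K M C →ₗ[k] Ind k H K M :=
    TensorProduct.lift (indMk K M ∘ₗ (CKsub k H K C).subtype)
  have hF (x) (m : M) : F (ckmk k H K M C x m) = indMk K M (x : H) m := TensorProduct.lift.tmul x m
  refine ⟨(conjRel k H K M C).liftQ F (Submodule.span_le.mpr ?_), hF⟩
  rintro _ ⟨x, a, m, hxa, rfl⟩
  rw [SetLike.mem_coe, LinearMap.mem_ker, map_sub, hF, hF, indMk_mul, sub_self]

end Induced

end MackeyPaper

end

section

open TensorProduct

namespace MackeyPaper

section Main

universe v

variable {k : Type} [Field k] {H : Type} [Ring H] [HopfAlgebra k H]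
  [FiniteDimensional k H] [IsSemisimpleRing H] [CharZero k] [IsAlgClosed k]
  {K : Subalgebra k H} {M : Type v} [AddCommGroup M] [Module k M] [Module ↥K M]

/-- The `K`-endomorphism of `M↑` projecting onto the copy of the conjugate module `ᶜM`. -/
theorem IsNormalHopfSubalgebra.exists_indProjection (hK : IsNormalHopfSubalgebra k H K)
    {C : Submodule k H} (hC : IsSimpleSubcoalgebra k H C) :
    ∃ P : Ind k H K M →ₗ[k] Ind k H K M, (∀ (a : K) z, P ((a : H) • z) = (a : H) • P z) ∧
      LinearMap.range P ≤ conjMsub k H K M C ∧ (∀ z ∈ conjMsub k H K M C, P z = z) ∧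
      ∀ D, IsSimpleSubcoalgebra k H D → CKsub k H K D ≠ CKsub k H K C →
        ∀ z ∈ conjMsub k H K M D, P z = 0 := by
  obtain ⟨p, hpX, hp1, hp0, hpr, hpl⟩ := hK.exists_projection
    (hK.1.isSubcoalgebra_CKsub hC.1) (fun x hx a ha => mul_mem_CKsub hx ha)
  obtain ⟨P, hP, hPK⟩ := exists_indMap (M := M) p hpr hpl
  refine ⟨P, hPK, ?_, ?_, ?_⟩
  · rintro _ ⟨z, rfl⟩
    rw [conjMsub_eq_map₂]
    induction z using Ind.induction_on with
    | h0 => simp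
    | hadd z w hz hw => rw [map_add]; exact add_mem hz hw
    | hmk h m => rw [hP]; exact Submodule.apply_mem_map₂ _ (hpX h) trivial
  · have : conjMsub k H K M C ≤ LinearMap.eqLocus P LinearMap.id := by
      rw [conjMsub_eq_map₂, Submodule.map₂_le]
      intro x hx m _
      rw [LinearMap.mem_eqLocus, hP, hp1 x hx, LinearMap.id_apply]
    exact this
  · intro D hD hDC
    have : conjMsub k H K M D ≤ LinearMap.ker P := by
      rw [conjMsub_eq_map₂, Submodule.map₂_le]
      intro x hx m _
      rw [LinearMap.mem_ker, hP, hp0 _ (hK.1.isSubcoalgebra_CKsub hD.1)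
        ((hD.CKsub_eq_or_disjoint hK.1 hC).resolve_left hDC).symm x hx, map_zero,
        LinearMap.zero_apply]
    exact this

theorem indMk_one_apply_eq_self (hK : IsNormalHopfSubalgebra k H K) {E : Ind k H K M →ₗ[k] M}
    (hE : ∀ (a : K) m, E (indMk K M (a : H) m) = a • m) {z : Ind k H K M}
    (hz : ∀ C, IsSimpleSubcoalgebra k H C → ¬ C ≤ K.toSubmodule →
      ∀ P : Ind k H K M →ₗ[k] Ind k H K M, (∀ (a : K) z, P ((a : H) • z) = (a : H) • P z) →
        LinearMap.range P ≤ conjMsub k H K M C → P z = 0) : indMk K M 1 (E z) = z := by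
  let s : Set (Submodule k H) := {Y | ∃ C, IsSimpleSubcoalgebra k H C ∧ CKsub k H K C = Y}
  choose rep hrep hY using fun Y : s => Y.2
  have hsup : ⨆ Y : s, (Y : Submodule k H) = ⊤ := by
    refine eq_top_iff.mpr (sSup_isSimpleSubcoalgebra (k := k) (H := H) ▸ sSup_le fun C hC => ?_)
    exact (le_CKsub C).trans (le_iSup (fun Y : s => (Y : Submodule k H)) ⟨_, C, hC, rfl⟩)
  have hmem : z ∈ ⨆ Y : s, conjMsub k H K M (rep Y) := by
    simp only [conjMsub_eq_map₂, hY, ← Submodule.map₂_iSup_left, hsup, map₂_indMk_top,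
      Submodule.mem_top]
  obtain ⟨f, hf, rfl⟩ := (Submodule.mem_iSup_iff_exists_finsupp _ _).mp hmem
  change (indMk K M 1 ∘ₗ E) _ = _
  rw [Finsupp.sum, map_sum]
  refine Finset.sum_congr rfl fun Y _ => ?_
  by_cases hYK : rep Y ≤ K.toSubmodule
  · have : conjMsub k H K M (rep Y) ≤ LinearMap.eqLocus (indMk K M 1 ∘ₗ E) LinearMap.id := by
      rw [conjMsub_eq_map₂, Submodule.map₂_le]
      intro x hx m _
      have hxK : x ∈ K := CKsub_le hYK (fun y hy a ha => K.mul_mem hy ha) hx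
      have := hE ⟨x, hxK⟩ m
      rw [LinearMap.mem_eqLocus, LinearMap.comp_apply, this, ← indMk_mul, one_mul,
        LinearMap.id_apply]
    exact this (hf Y)
  · obtain ⟨P, hPK, hPC, hP1, hP0⟩ := hK.exists_indProjection (M := M) (hrep Y)
    have h0 := hz _ (hrep Y) hYK P hPK hPC
    rw [Finsupp.sum, map_sum, Finset.sum_eq_single Y, hP1 _ (hf Y)] at h0
    · rw [h0, map_zero]
    · intro Z _ hZY
      refine hP0 _ (hrep Z) (fun h => hZY (Subtype.ext ?_)) _ (hf Z)
      rw [← hY, h, hY]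
    · intro hYf
      rw [Finsupp.notMem_support_iff.mp hYf, map_zero]

theorem IsNormalHopfSubalgebra.exists_indToSelf [IsScalarTower k ↥K M]
    (hK : IsNormalHopfSubalgebra k H K) :
    ∃ E : Ind k H K M →ₗ[k] M, (∀ (a : K) m, E (indMk K M (a : H) m) = a • m) ∧
      (∀ h m, ∃ a : K, E (indMk K M h m) = a • m) ∧
      (∀ (a : K) z, E ((a : H) • z) = a • E z) ∧
      ∀ C, IsSimpleSubcoalgebra k H C → ¬ C ≤ K.toSubmodule →
        ∀ z ∈ conjMsub k H K M C, E z = 0 := by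
  obtain ⟨p, hpX, hp1, hp0, hpr, hpl⟩ := hK.exists_projection hK.1.1
    (fun x hx a ha => K.mul_mem hx ha)
  let q : H →ₗ[k] K := LinearMap.codRestrict K.toSubmodule p hpX
  have hq (h : H) : (q h : H) = p h := rfl
  obtain ⟨E, hE⟩ := exists_indLift (K := K) (M := M) ((Algebra.lsmul k k M).toLinearMap ∘ₗ q)
    (fun h a m => by
      have : q (h * a) = q h * a := Subtype.ext (hpr a a.2 h)
      simp [this])
  replace hE (h : H) (m : M) : E (indMk K M h m) = q h • m := hE h m
  refine ⟨E, fun a m => ?_, fun h m => ⟨_, hE h m⟩, fun a z => ?_, fun C hC hCK => ?_⟩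
  · rw [hE, show q a = a from Subtype.ext (hp1 a a.2)]
  · induction z using Ind.induction_on with
    | h0 => simp
    | hadd z w hz hw => rw [smul_add, map_add, map_add, hz, hw, smul_add]
    | hmk h m => rw [smul_indMk, hE, hE, smul_smul, show q (a * h) = a * q h from
        Subtype.ext (hpl a a.2 h)]
  · have : conjMsub k H K M C ≤ LinearMap.ker E := by
      rw [conjMsub_eq_map₂, Submodule.map₂_le]
      intro x hx m _
      have hx0 : q x = 0 := Subtype.ext (hp0 _ (hK.1.isSubcoalgebra_CKsub hC.1)
        (hC.disjoint_of_not_le hK.1 hCK).symm x hx)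
      rw [LinearMap.mem_ker, hE, hx0, zero_smul]
    exact this

open DirectSum in
theorem exists_directSum_conjM_bijective (hK : IsNormalHopfSubalgebra k H K) {ι : Type}
    [DecidableEq ι] {rep : ι → Submodule k H} (hrep : IsDoubleCosetReps k H ⊥ K rep) :
    ∃ φ : (⨁ i : ι, ConjM k H K M (rep i)) →ₗ[k] Ind k H K M, Function.Bijective φ ∧
      ∀ i x m, φ (DirectSum.of (fun i => ConjM k H K M (rep i)) i (conjMk K M (rep i) x m)) =
        indMk K M (x : H) m := by
  obtain ⟨hsimple, hinj, hsurj⟩ := hrep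
  simp only [Algebra.toSubmodule_bot, one_mul] at hinj hsurj
  have hdisj {i j : ι} (h : i ≠ j) : Disjoint (CKsub k H K (rep i)) (CKsub k H K (rep j)) :=
    ((hsimple i).CKsub_eq_or_disjoint hK.1 (hsimple j)).resolve_left fun h' => h (hinj i j h')
  have hsup : ⨆ i, CKsub k H K (rep i) = ⊤ := by
    refine eq_top_iff.mpr (sSup_isSimpleSubcoalgebra (k := k) (H := H) ▸ sSup_le fun C hC => ?_)
    obtain ⟨i, hi⟩ := hsurj C hC
    exact hi.trans (le_iSup (fun i => CKsub k H K (rep i)) i)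
  choose g hg using fun i => exists_conjToInd (M := M) (K := K) (rep i)
  let φ : (⨁ i : ι, ConjM k H K M (rep i)) →ₗ[k] Ind k H K M := DirectSum.toModule k ι _ g
  have hφ (i : ι) (w : ConjM k H K M (rep i)) :
      φ (DirectSum.lof k ι (fun i => ConjM k H K M (rep i)) i w) = g i w :=
    DirectSum.toModule_lof (M := fun i => ConjM k H K M (rep i)) k i w
  refine ⟨φ, ⟨?_, ?_⟩, fun i x m => (hφ i _).trans (hg i x m)⟩
  · have hret (i : ι) : ∃ r : Ind k H K M →ₗ[k] ConjM k H K M (rep i),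
        r ∘ₗ φ = DirectSum.component k ι (fun i => ConjM k H K M (rep i)) i := by
      obtain ⟨p, hpX, hp1, hp0, hpr, -⟩ := hK.exists_projection
        (hK.1.isSubcoalgebra_CKsub (hsimple i).1) (fun x hx a ha => mul_mem_CKsub hx ha)
      let q : H →ₗ[k] CKsub k H K (rep i) := p.codRestrict _ hpX
      obtain ⟨r, hr⟩ := exists_indLift (K := K) (conjMk K M (rep i) ∘ₗ q) (fun h a m => by
        have : q (h * a) = ⟨q h * a, mul_mem_CKsub (q h).2 a.2⟩ := Subtype.ext (hpr a a.2 h)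
        rw [LinearMap.comp_apply, this, conjMk_mul, LinearMap.comp_apply])
      refine ⟨r, DirectSum.linearMap_ext k fun j => ConjM.hom_ext fun x m => ?_⟩
      simp only [LinearMap.comp_apply, hφ, hg, hr]
      by_cases hij : i = j
      · subst hij
        rw [DirectSum.component.lof_self, show q x = x from Subtype.ext (hp1 x x.2)]
      · rw [show q x = 0 from Subtype.ext (hp0 _ (hK.1.isSubcoalgebra_CKsub (hsimple j).1)
          (hdisj hij) x x.2), DirectSum.component.of, dif_neg (Ne.symm hij), map_zero,
          LinearMap.zero_apply]
    choose r hr using hret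
    rw [injective_iff_map_eq_zero]
    intro z hz
    refine DFinsupp.ext fun i => ?_
    have := LinearMap.congr_fun (hr i) z
    rw [LinearMap.comp_apply, hz, map_zero] at this
    exact this.symm
  · rw [← LinearMap.range_eq_top, eq_top_iff, ← map₂_indMk_top, ← hsup, Submodule.map₂_iSup_left]
    refine iSup_le fun i => Submodule.map₂_le.mpr fun x hx m _ => ?_
    exact ⟨_, (hφ i (conjMk K M (rep i) ⟨x, hx⟩ m)).trans (hg i _ m)⟩

theorem isSimpleModule_of_isSimpleModule_ind [IsScalarTower k ↥K M]
    (hK : IsNormalHopfSubalgebra k H K) (hS : IsSimpleModule H (Ind k H K M)) :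
    IsSimpleModule ↥K M := by
  obtain ⟨E, hE1, hE, -, -⟩ := hK.exists_indToSelf (M := M)
  have hE1' (m : M) : E (indMk K M 1 m) = m := by simpa using hE1 1 m
  have hnt : Nontrivial M := by
    have := IsSimpleModule.nontrivial H (Ind k H K M)
    by_contra h
    rw [not_nontrivial_iff_subsingleton] at h
    obtain ⟨z, hz⟩ := exists_ne (0 : Ind k H K M)
    refine hz ?_
    induction z using Ind.induction_on with
    | h0 => rfl
    | hadd z w hz hw => simp_all
    | hmk h m => rw [Subsingleton.elim m 0, map_zero]
  rw [isSimpleModule_iff]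
  refine { exists_pair_ne := ⟨⊥, ⊤, bot_ne_top⟩, eq_bot_or_eq_top := fun N => ?_ }
  let W : Submodule H (Ind k H K M) := Submodule.span H (indMk K M 1 '' (N : Set M))
  have hW (n) (hn : n ∈ N) : indMk K M 1 n ∈ W := Submodule.subset_span ⟨n, hn, rfl⟩
  rcases eq_bot_or_eq_top W with h | h
  · refine .inl ((Submodule.eq_bot_iff _).mpr fun n hn => ?_)
    have := hW n hn
    rw [h, Submodule.mem_bot] at this
    rw [← hE1' n, this, map_zero]
  · refine .inr (eq_top_iff.mpr fun m _ => ?_)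
    have hEW (z) (hz : z ∈ W) : ∀ h : H, E (h • z) ∈ N := by
      induction hz using Submodule.span_induction with
      | mem z hz =>
        obtain ⟨n, hn, rfl⟩ := hz
        intro h
        obtain ⟨a, ha⟩ := hE h n
        rw [smul_indMk, mul_one, ha]
        exact N.smul_mem a hn
      | zero => simp
      | add z w _ _ hz hw => intro h; rw [smul_add, map_add]; exact N.add_mem (hz h) (hw h)
      | smul h' z _ hz => intro h; rw [smul_smul]; exact hz _
    simpa [hE1'] using hEW (indMk K M 1 m) (h ▸ trivial) 1

theorem isSimpleModule_ind [IsScalarTower k ↥K M] (hK : IsNormalHopfSubalgebra k H K)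
    (hM : IsSimpleModule ↥K M)
    (hno : ∀ C : Submodule k H, IsSimpleSubcoalgebra k H C → ¬ C ≤ K.toSubmodule →
      ∀ f : M →ₗ[k] Ind k H K M, (∀ (a : ↥K) (m : M), f (a • m) = (a : H) • f m) →
        LinearMap.range f ≤ conjMsub k H K M C → f = 0) :
    IsSimpleModule H (Ind k H K M) := by
  obtain ⟨E, hE1, -, hEK, -⟩ := hK.exists_indToSelf (M := M)
  have hE1' (m : M) : E (indMk K M 1 m) = m := by simpa using hE1 1 m
  have hnt : Nontrivial (Ind k H K M) :=
    have := IsSimpleModule.nontrivial ↥K M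
    Function.Surjective.nontrivial (f := E) fun m => ⟨_, hE1' m⟩
  rw [isSimpleModule_iff]
  refine { exists_pair_ne := ⟨⊥, ⊤, bot_ne_top⟩, eq_bot_or_eq_top := fun N => ?_ }
  obtain ⟨N', hN⟩ := exists_isCompl N
  let P : Ind k H K M →ₗ[H] Ind k H K M := N.projection N' hN
  have hPP (z) : P (P z) = P z := N.projection_apply_left hN ⟨P z, N.projection_apply_mem hN z⟩
  let f : M →ₗ[k] Ind k H K M := P.restrictScalars k ∘ₗ indMk K M 1
  have hfP (m : M) : f m = P (indMk K M 1 m) := rfl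
  have hf (a : ↥K) (m : M) : f (a • m) = (a : H) • f m := by
    rw [hfP, hfP, ← indMk_mul, one_mul, ← map_smul, smul_indMk, mul_one]
  have hfE (m : M) : indMk K M 1 (E (f m)) = f m :=
    indMk_one_apply_eq_self hK hE1 fun C hC hCK Q hQK hQC =>
      LinearMap.congr_fun (hno C hC hCK (Q ∘ₗ f) (fun a m => by simp [hf, hQK])
        ((LinearMap.range_comp_le_range _ _).trans hQC)) m
  let g : M →ₗ[↥K] M :=
    { toFun := fun m => E (f m)
      map_add' := by simp
      map_smul' := fun a m => by rw [hf, hEK, RingHom.id_apply] }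
  have hfg (m : M) : f m = indMk K M 1 (g m) := (hfE m).symm
  have hgg (m : M) : g (g m) = g m := by
    change E (f (g m)) = E (f m)
    rw [hfP, ← hfg, hfP, hPP]
  have hPf (h : H) (m : M) : P (indMk K M h m) = indMk K M h (g m) := by
    have : indMk K M h m = h • indMk K M 1 m := by rw [smul_indMk, mul_one]
    rw [this, map_smul, ← hfP, hfg, smul_indMk, mul_one]
  rcases eq_bot_or_eq_top (LinearMap.ker g) with h | h
  · have hg (m : M) : g m = m := LinearMap.ker_eq_bot.mp h (hgg m)
    have hP (z) : P z = z := by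
      induction z using Ind.induction_on with
      | h0 => simp
      | hadd z w hz hw => rw [map_add, hz, hw]
      | hmk h m => rw [hPf, hg]
    exact .inr (eq_top_iff.mpr fun z _ => hP z ▸ N.projection_apply_mem hN z)
  · have hg (m : M) : g m = 0 := by rw [LinearMap.ker_eq_top.mp h, LinearMap.zero_apply]
    have hP (z) : P z = 0 := by
      induction z using Ind.induction_on with
      | h0 => simp
      | hadd z w hz hw => rw [map_add, hz, hw, add_zero]
      | hmk h m => rw [hPf, hg, map_zero]
    exact .inl ((Submodule.eq_bot_iff _).mpr fun z hz =>
      (N.projection_apply_left hN ⟨z, hz⟩).symm.trans (hP z))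

theorem eq_zero_of_isSimpleModule_ind [IsScalarTower k ↥K M] [Module.Finite k M]
    (hK : IsNormalHopfSubalgebra k H K) (hS : IsSimpleModule H (Ind k H K M))
    {C : Submodule k H} (hC : IsSimpleSubcoalgebra k H C) (hCK : ¬ C ≤ K.toSubmodule)
    {f : M →ₗ[k] Ind k H K M} (hf : ∀ (a : ↥K) (m : M), f (a • m) = (a : H) • f m)
    (hfC : LinearMap.range f ≤ conjMsub k H K M C) : f = 0 := by
  obtain ⟨E, hE1, -, -, hE0⟩ := hK.exists_indToSelf (M := M)
  obtain ⟨F, hF⟩ := exists_indEnd f hf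
  obtain ⟨c, hc⟩ := exists_eq_smul_of_isSimpleModule_ind hS F
  have hfm (m : M) : f m = indMk K M 1 (c • m) := by
    rw [map_smul]
    have h := hF 1 m
    rw [hc, one_smul] at h
    exact h.symm
  ext m
  have h0 := hE0 C hC hCK _ (hfC ⟨m, rfl⟩)
  have h1 := hE1 1 (c • m)
  rw [one_smul, OneMemClass.coe_one, ← hfm, h0] at h1
  rw [hfm, ← h1, map_zero, LinearMap.zero_apply]

end Main

end MackeyPaper

end

namespace MackeyPaper

noncomputable section

universe v

variable (k : Type) [Field k] [CharZero k] [IsAlgClosed k]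
variable (H : Type) [Ring H] [HopfAlgebra k H]

open DirectSum

section Statements

variable [FiniteDimensional k H] [IsSemisimpleRing H]

/-- Proposition 70: let `K` be a normal Hopf subalgebra of `H`
and `M` a finite-dimensional `K`-module.
(1) `M↑_K^H↓_K^H ≅ ⊕_{C ∈ H/K} ᶜM` as `K`-modules, the sum running over
representatives of the right cosets of `K` in `H`; concretely, for any system
of right-coset representatives there is a `k`-linear bijection
`⊕_C ᶜM → M↑_K^H`, `x ⊗ m ↦ x ⊗ m`, which is `K`-equivariant (for the left
multiplication actions of `K` on both sides).
(2) `M↑_K^H` is irreducible if and only if `M` is an irreducible `K`-module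
which is not a direct summand of (i.e., admits no nonzero `K`-homomorphism
into) any conjugate module `ᶜM` with `C` a simple subcoalgebra of `H` not
contained in `K`. -/
theorem statement_18 (K : Subalgebra k H) (hK : IsNormalHopfSubalgebra k H K)
    (M : Type v) [AddCommGroup M] [Module k M] [Module ↥K M]
    [IsScalarTower k ↥K M] [Module.Finite k M] :
    (∀ (ι : Type) [DecidableEq ι] (rep : ι → Submodule k H),
      IsDoubleCosetReps k H ⊥ K rep →
      ∃ φ : (⨁ i : ι, ConjM k H K M (rep i)) →ₗ[k] Ind k H K M,
        Function.Bijective φ ∧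
        (∀ (i : ι) (x : ↥(CKsub k H K (rep i))) (m : M),
          φ (DirectSum.of (fun i => ConjM k H K M (rep i)) i
              (Submodule.Quotient.mk (ckmk k H K M (rep i) x m))) =
            Submodule.Quotient.mk ((x : H) ⊗ₜ[k] m)) ∧
        (∀ (a : ↥K) (i : ι) (x : ↥(CKsub k H K (rep i))) (m : M)
          (hax : (a : H) * (x : H) ∈ CKsub k H K (rep i)),
          φ (DirectSum.of (fun i => ConjM k H K M (rep i)) i
              (Submodule.Quotient.mk (ckmk k H K M (rep i) ⟨(a : H) * (x : H), hax⟩ m))) =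
            (a : H) • φ (DirectSum.of (fun i => ConjM k H K M (rep i)) i
              (Submodule.Quotient.mk (ckmk k H K M (rep i) x m))))) ∧
    (IsSimpleModule H (Ind k H K M) ↔
      (IsSimpleModule ↥K M ∧
        ∀ C : Submodule k H, IsSimpleSubcoalgebra k H C → ¬ C ≤ K.toSubmodule →
          ¬ ∃ f : M →ₗ[k] Ind k H K M, f ≠ 0 ∧
            (∀ (a : ↥K) (m : M), f (a • m) = (a : H) • f m) ∧
            LinearMap.range f ≤ conjMsub k H K M C)) := by
  refine ⟨fun ι _ rep hrep => ?_, fun hS => ⟨isSimpleModule_of_isSimpleModule_ind hK hS, ?_⟩,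
    fun ⟨hM, hno⟩ => isSimpleModule_ind hK hM fun C hC hCK f hf hfC => ?_⟩
  · obtain ⟨φ, hb, hφ⟩ := exists_directSum_conjM_bijective (M := M) hK hrep
    refine ⟨φ, hb, hφ, fun a i x m hax => (hφ i ⟨_, hax⟩ m).trans ?_⟩
    exact (smul_indMk (a : H) (x : H) m).symm.trans
      (congrArg (fun z => (a : H) • z) (hφ i x m).symm)
  · rintro C hC hCK ⟨f, hf0, hf, hfC⟩
    exact hf0 (eq_zero_of_isSimpleModule_ind hK hS hC hCK hf hfC)
  · by_contra h
    exact hno C hC hCK ⟨f, h, hf, hfC⟩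

end Statements

end

end MackeyPaper
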